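/- arXiv:1507.04838 — 3 statements merged into one kernel-verified Lean document; each statement's English description precedes it below -/
import Mathlib

section
/- Let S be the Motzkin monoid M_n or the Jones monoid J_n, let k be a field and ξ ∈ k ∖ {0}. If α ∈ S and α is not the identity element, then ξ·α belongs to the twisted variant S^ξ. -/
open Relation

/-! ### The partition monoid and its planar submonoids -/

/-- Vertices of a partition diagram: `Sum.inl i` is the upper vertex `i`,
`Sum.inr i` is the lower vertex `i′`. -/
abbrev PV (n : ℕ) := Fin n ⊕ Fin n

/-- An element of the partition monoid `P_n`: a set partition of the `2n` vertices,
encoded as an equivalence relation (setoid). -/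
abbrev PElt (n : ℕ) := Setoid (PV n)

/-- Three layers of vertices, used to form products. -/
abbrev TV (n : ℕ) := Fin n ⊕ (Fin n ⊕ Fin n)

/-- Embedding of the vertices of the upper factor into the three layers. -/
def upEmb {n : ℕ} : PV n → TV n
  | .inl i => .inl i
  | .inr i => .inr (.inl i)

/-- Embedding of the vertices of the lower factor into the three layers. -/
def downEmb {n : ℕ} : PV n → TV n
  | .inl i => .inr (.inl i)
  | .inr i => .inr (.inr i)

/-- Embedding of the vertices of the product into the three layers. -/
def outEmb {n : ℕ} : PV n → TV n
  | .inl i => .inl i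
  | .inr i => .inr (.inr i)

/-- The stacked graph of `a` on `b`: relations of `a` on layers 1–2 together with
relations of `b` on layers 2–3. -/
def stackRel {n : ℕ} (a b : PElt n) : TV n → TV n → Prop := fun x y =>
  (∃ p q : PV n, a.r p q ∧ x = upEmb p ∧ y = upEmb q) ∨
  (∃ p q : PV n, b.r p q ∧ x = downEmb p ∧ y = downEmb q)

/-- The finest common coarsening (transitive closure) of the stacked graph. -/
def stackSetoid {n : ℕ} (a b : PElt n) : Setoid (TV n) :=
  EqvGen.setoid (stackRel a b)

/-- The product in the partition monoid: restrict the coarsening of the stacked graph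
to the outer two layers. -/
def pmul {n : ℕ} (a b : PElt n) : PElt n :=
  Setoid.comap outEmb (stackSetoid a b)

/-- The identity of the partition monoid: blocks `{i, i′}`. -/
def pid (n : ℕ) : PElt n :=
  ⟨fun x y => Sum.elim id id x = Sum.elim id id y,
    ⟨fun _ => rfl, fun h => h.symm, fun h₁ h₂ => h₁.trans h₂⟩⟩

/-- A vertex of the triple-layer graph lies in the identified middle row. -/
def isMiddle {n : ℕ} : TV n → Prop
  | .inr (.inl _) => True
  | _ => False

/-- `m(a,b)`: the number of floating components (components of the stacked graph of `a` on `b`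
contained entirely in the identified middle row). -/
noncomputable def floatCount {n : ℕ} (a b : PElt n) : ℕ :=
  Nat.card {c : Quotient (stackSetoid a b) //
    ∀ x : TV n, Quotient.mk (stackSetoid a b) x = c → isMiddle x}

/-- A block (equivalence class) is a transversal if it contains both an upper
and a lower vertex. -/
def IsTransClass {n : ℕ} (a : PElt n) (c : Quotient a) : Prop :=
  (∃ i : Fin n, Quotient.mk a (.inl i) = c) ∧ (∃ j : Fin n, Quotient.mk a (.inr j) = c)

/-- The rank of a partition: the number of transversal blocks. -/
noncomputable def prank {n : ℕ} (a : PElt n) : ℕ :=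
  Nat.card {c : Quotient a // IsTransClass a c}

/-- Position of a vertex in the boundary order `1, …, n, n′, …, 1′` of the rectangle. -/
def ordIdx (n : ℕ) : PV n → ℕ
  | .inl i => i.val
  | .inr i => 2 * n - 1 - i.val

/-- Planarity: the partition is non-crossing with respect to the boundary order
`1 < ⋯ < n < n′ < ⋯ < 1′`. -/
def IsPlanar {n : ℕ} (a : PElt n) : Prop :=
  ¬ ∃ w x y z : PV n, ordIdx n w < ordIdx n x ∧ ordIdx n x < ordIdx n y ∧
      ordIdx n y < ordIdx n z ∧ a.r w y ∧ a.r x z ∧ ¬ a.r w x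

/-- The size of the block containing a given vertex. -/
noncomputable def blockCard {n : ℕ} (a : PElt n) (x : PV n) : ℕ :=
  Nat.card {y : PV n // a.r x y}

/-- The Motzkin monoid: planar partitions with all blocks of size at most 2. -/
def Motzkin (n : ℕ) : Set (PElt n) :=
  {a | IsPlanar a ∧ ∀ x : PV n, blockCard a x ≤ 2}

/-- The Jones (Temperley–Lieb) monoid: planar partitions with all blocks of size
exactly 2. -/
def Jones (n : ℕ) : Set (PElt n) :=
  {a | IsPlanar a ∧ ∀ x : PV n, blockCard a x = 2}

/-! ### The interface graph -/

/-- Lower edge of the interface graph `Γ(a)`: a block `{i,j}` of `a` on upper vertices. -/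
def LowEdge {n : ℕ} (a : PElt n) (i j : Fin n) : Prop :=
  i ≠ j ∧ a.r (.inl i) (.inl j)

/-- Upper edge of the interface graph `Γ(a)`: a block `{i′,j′}` of `a` on lower vertices. -/
def UpEdge {n : ℕ} (a : PElt n) (i j : Fin n) : Prop :=
  i ≠ j ∧ a.r (.inr i) (.inr j)

/-- Vertex `i` of `Γ(a)` carries a lower edge. -/
def hasLow {n : ℕ} (a : PElt n) (i : Fin n) : Prop := ∃ j, LowEdge a i j

/-- Vertex `i` of `Γ(a)` carries an upper edge. -/
def hasUp {n : ℕ} (a : PElt n) (i : Fin n) : Prop := ∃ j, UpEdge a i j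

/-- Vertex `i` is active downwards: the upper vertex `i` lies in a transversal of `a`. -/
def activeDown {n : ℕ} (a : PElt n) (i : Fin n) : Prop := ∃ j : Fin n, a.r (.inl i) (.inr j)

/-- Vertex `i` is active upwards: the lower vertex `i′` lies in a transversal of `a`. -/
def activeUp {n : ℕ} (a : PElt n) (i : Fin n) : Prop := ∃ j : Fin n, a.r (.inr i) (.inl j)

/-- Vertex `i` is inert downwards: the upper vertex `i` is a singleton block of `a`. -/
def inertDown {n : ℕ} (a : PElt n) (i : Fin n) : Prop := ∀ y, a.r (.inl i) y → y = .inl i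

/-- Vertex `i` is inert upwards: the lower vertex `i′` is a singleton block of `a`. -/
def inertUp {n : ℕ} (a : PElt n) (i : Fin n) : Prop := ∀ y, a.r (.inr i) y → y = .inr i

/-- Adjacency in the interface graph `Γ(a)`. -/
def gedge {n : ℕ} (a : PElt n) (i j : Fin n) : Prop := LowEdge a i j ∨ UpEdge a i j

/-- Connectivity in the interface graph `Γ(a)`. -/
def gconn {n : ℕ} (a : PElt n) : Fin n → Fin n → Prop := EqvGen (gedge a)

/-- `θ` is (the vertex set of) a connected component of `Γ(a)`. -/
def IsComp {n : ℕ} (a : PElt n) (θ : Set (Fin n)) : Prop :=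
  θ.Nonempty ∧ ∀ i ∈ θ, ∀ j : Fin n, (gconn a i j ↔ j ∈ θ)

/-- `θ` is a cycle component of `Γ(a)`: every vertex carries both a lower and an upper edge. -/
def IsCycleComp {n : ℕ} (a : PElt n) (θ : Set (Fin n)) : Prop :=
  IsComp a θ ∧ ∀ i ∈ θ, hasLow a i ∧ hasUp a i

/-- `θ` is a path component of `Γ(a)`: some vertex misses an edge on some side. -/
def IsPathComp {n : ℕ} (a : PElt n) (θ : Set (Fin n)) : Prop :=
  IsComp a θ ∧ ∃ i ∈ θ, ¬ hasLow a i ∨ ¬ hasUp a i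

/-- An inert path: every terminus is inert on its free side. -/
def IsInertPathComp {n : ℕ} (a : PElt n) (θ : Set (Fin n)) : Prop :=
  IsPathComp a θ ∧ ∀ i ∈ θ,
    (¬ hasLow a i → inertDown a i) ∧ (¬ hasUp a i → inertUp a i)

/-- A trans-active path: even length (its two free ends lie on opposite sides) with
both termini active on their free sides. -/
def IsTransActivePathComp {n : ℕ} (a : PElt n) (θ : Set (Fin n)) : Prop :=
  IsPathComp a θ ∧
  (∃! i : Fin n, i ∈ θ ∧ ¬ hasLow a i) ∧ (∃! i : Fin n, i ∈ θ ∧ ¬ hasUp a i) ∧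
  ∀ i ∈ θ, (¬ hasLow a i → activeDown a i) ∧ (¬ hasUp a i → activeUp a i)

/-- The number of edges of `Γ(a)` contained in `θ` (its length, for a component `θ`). -/
noncomputable def compEdgeCount {n : ℕ} (a : PElt n) (θ : Set (Fin n)) : ℕ :=
  Nat.card {p : Fin n × Fin n // p.1 < p.2 ∧ p.1 ∈ θ ∧ p.2 ∈ θ ∧ LowEdge a p.1 p.2} +
  Nat.card {p : Fin n × Fin n // p.1 < p.2 ∧ p.1 ∈ θ ∧ p.2 ∈ θ ∧ UpEdge a p.1 p.2}

/-! ### The map `α ↦ α̂` and the sets `D`, `Θ(δ)` -/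

/-- The 0-based position of `i` among the upward-active vertices. -/
noncomputable def posUp {n : ℕ} (a : PElt n) (i : Fin n) : ℕ :=
  Nat.card {j : Fin n // j < i ∧ activeUp a j}

/-- The 0-based position of `i` among the downward-active vertices. -/
noncomputable def posDown {n : ℕ} (a : PElt n) (i : Fin n) : ℕ :=
  Nat.card {j : Fin n // j < i ∧ activeDown a j}

/-- `i` and `j` are consecutive upward-active vertices paired in forming `α̂`
(`i` in an even position `2t`, `j` in position `2t+1 < 2⌊r/2⌋`). -/
noncomputable def pairedUp {n : ℕ} (a : PElt n) (i j : Fin n) : Prop :=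
  activeUp a i ∧ activeUp a j ∧ Even (posUp a i) ∧ posUp a j = posUp a i + 1 ∧
    posUp a j < 2 * (prank a / 2)

/-- `i` and `j` are consecutive downward-active vertices paired in forming `α̂`. -/
noncomputable def pairedDown {n : ℕ} (a : PElt n) (i j : Fin n) : Prop :=
  activeDown a i ∧ activeDown a j ∧ Even (posDown a i) ∧ posDown a j = posDown a i + 1 ∧
    posDown a j < 2 * (prank a / 2)

/-- The transversal relations removed in forming `α̂` (those of the first `2⌊r/2⌋`
transversals). -/
noncomputable def removedTrans {n : ℕ} (a : PElt n) (x y : PV n) : Prop :=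
  ∃ i j : Fin n, a.r (.inl i) (.inr j) ∧ posDown a i < 2 * (prank a / 2) ∧
    ((x = .inl i ∧ y = .inr j) ∨ (x = .inr j ∧ y = .inl i))

/-- The generating relation of `α̂`: the relations of `α` minus the removed transversals,
plus the new blocks pairing consecutive active vertices. -/
noncomputable def hatRel {n : ℕ} (a : PElt n) (x y : PV n) : Prop :=
  (a.r x y ∧ ¬ removedTrans a x y) ∨
  (∃ i j : Fin n, pairedUp a i j ∧
      ((x = .inr i ∧ y = .inr j) ∨ (x = .inr j ∧ y = .inr i))) ∨
  (∃ i j : Fin n, pairedDown a i j ∧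
      ((x = .inl i ∧ y = .inl j) ∨ (x = .inl j ∧ y = .inl i)))

/-- The element `α̂` obtained from `α` by pairing off consecutive active vertices. -/
noncomputable def hat {n : ℕ} (a : PElt n) : PElt n := EqvGen.setoid (hatRel a)

/-- The idempotents of a subset `S` (with respect to the partition product). -/
def Eset {n : ℕ} (S : Set (PElt n)) : Set (PElt n) := {a ∈ S | pmul a a = a}

/-- `D(S) = D₀ ∪ E(D₁)`: the idempotents of `S` of rank at most 1. -/
def Dset {n : ℕ} (S : Set (PElt n)) : Set (PElt n) :=
  {d ∈ S | pmul d d = d ∧ prank d ≤ 1}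

/-- `θ` lies (entirely) to the left of the leftmost transversal of `a`. -/
def LeftOfTrans {n : ℕ} (a : PElt n) (θ : Set (Fin n)) : Prop :=
  ∀ i ∈ θ, ∀ j : Fin n, activeDown a j ∨ activeUp a j → i < j

/-- `Θ(a)`: the cycle components of `Γ(a)` lying entirely to the left of the leftmost
transversal. -/
def ThetaSet {n : ℕ} (a : PElt n) : Set (Set (Fin n)) :=
  {θ | IsCycleComp a θ ∧ LeftOfTrans a θ}

/-! ### Returns, special pairs and `θ`-covers -/

/-- The block `{i,j}` of `a` on upper vertices is an upper return: no upper block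
`{k,l}` has `k<i<j<l`, and no transversal contains an upper vertex smaller than `i`. -/
def UpperReturn {n : ℕ} (a : PElt n) (i j : Fin n) : Prop :=
  i < j ∧ a.r (.inl i) (.inl j) ∧
  (¬ ∃ k l : Fin n, k < i ∧ j < l ∧ a.r (.inl k) (.inl l)) ∧
  (¬ ∃ k : Fin n, k < i ∧ activeDown a k)

/-- The block `{i′,j′}` of `a` on lower vertices is a lower return. -/
def LowerReturn {n : ℕ} (a : PElt n) (i j : Fin n) : Prop :=
  i < j ∧ a.r (.inr i) (.inr j) ∧
  (¬ ∃ k l : Fin n, k < i ∧ j < l ∧ a.r (.inr k) (.inr l)) ∧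
  (¬ ∃ k : Fin n, k < i ∧ activeUp a k)

/-- The interface-graph adjacency of `a` after deleting the lower-vertex block `{i′,j′}`
and the upper-vertex block `{k,l}`. -/
def redEdge {n : ℕ} (a : PElt n) (i j k l : Fin n) (u v : Fin n) : Prop :=
  (LowEdge a u v ∧ ({u, v} : Set (Fin n)) ≠ {k, l}) ∨
  (UpEdge a u v ∧ ({u, v} : Set (Fin n)) ≠ {i, j})

/-- The relation generating the `θ`-cover `a − (e′,f)`, for `e′ = {i′,j′}` and
`f = {k,l}`: delete the two blocks, and join each freed upper vertex to the freed lower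
vertex reached along its path. -/
def coverRel {n : ℕ} (a : PElt n) (i j k l : Fin n) (x y : PV n) : Prop :=
  (a.r x y ∧ ({x, y} : Set (PV n)) ≠ {.inl k, .inl l} ∧
    ({x, y} : Set (PV n)) ≠ {.inr i, .inr j}) ∨
  (∃ u v : Fin n, u ∈ ({k, l} : Set (Fin n)) ∧ v ∈ ({i, j} : Set (Fin n)) ∧
    EqvGen (redEdge a i j k l) u v ∧
    ((x = .inl u ∧ y = .inr v) ∨ (x = .inr v ∧ y = .inl u)))

/-- The `θ`-cover `a − (e′,f)` as a partition. -/
def coverElt {n : ℕ} (a : PElt n) (i j k l : Fin n) : PElt n :=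
  EqvGen.setoid (coverRel a i j k l)

/-- `b` is a `θ`-cover of `a`: `θ ∈ Θ(a)` and `b = a − (e′,f)` for some special pair
`(e′,f)` over `θ` (one lower-return and one upper-return edge of `θ`). -/
def IsThetaCover {n : ℕ} (a : PElt n) (θ : Set (Fin n)) (b : PElt n) : Prop :=
  θ ∈ ThetaSet a ∧
  ∃ i j k l : Fin n, i ∈ θ ∧ j ∈ θ ∧ k ∈ θ ∧ l ∈ θ ∧
    LowerReturn a i j ∧ UpperReturn a k l ∧ b = coverElt a i j k l

/-- `a ≪_d b`: `a = b` or there is a chain of `θ`-covers from `a` to `b` along pairwise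
distinct cycles `θ ∈ Θ(d)`. -/
def llRel {n : ℕ} (d : PElt n) (a b : PElt n) : Prop :=
  a = b ∨ ∃ (h : ℕ) (θs : Fin h → Set (Fin n)) (as : Fin (h + 1) → PElt n),
    Function.Injective θs ∧ (∀ ι, θs ι ∈ ThetaSet d) ∧
    as 0 = a ∧ as (Fin.last h) = b ∧
    ∀ ι : Fin h, IsThetaCover (as ι.castSucc) (θs ι) (as ι.succ)

/-- The fibre `F_d = {α ∈ E(S) : α̂ = d}`. -/
def Fib {n : ℕ} (S : Set (PElt n)) (d : PElt n) : Set (PElt n) :=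
  {a ∈ Eset S | hat a = d}

/-- `C_d(θ) = C*_d(θ) ∪ {d}`, where `C*_d(θ)` is the set of `θ`-covers of `d`. -/
def CoverSet {n : ℕ} (d : PElt n) (θ : Set (Fin n)) : Set (PElt n) :=
  insert d {b | IsThetaCover d θ b}

/-- `u_θ`: the number of upper-return blocks among the edges of `θ`. -/
noncomputable def uRet {n : ℕ} (a : PElt n) (θ : Set (Fin n)) : ℕ :=
  Nat.card {p : Fin n × Fin n // p.1 ∈ θ ∧ p.2 ∈ θ ∧ UpperReturn a p.1 p.2}

/-- `l_θ`: the number of lower-return blocks among the edges of `θ`. -/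
noncomputable def lRet {n : ℕ} (a : PElt n) (θ : Set (Fin n)) : ℕ :=
  Nat.card {p : Fin n × Fin n // p.1 ∈ θ ∧ p.2 ∈ θ ∧ LowerReturn a p.1 p.2}

/-! ### Twisted semigroup algebras -/

variable {K : Type} [Field K]

/-- The underlying vector space of the semigroup algebra `k[P_n]`. -/
abbrev PAlg (n : ℕ) (K : Type) [Field K] := PElt n →₀ K

/-- The twisted multiplication on `k[P_n]`: on basis elements,
`a ∘ b = ξ^{m(a,b)} · (ab)`, extended bilinearly. -/
noncomputable def twistMul {n : ℕ} (ξ : K) (f g : PAlg n K) : PAlg n K :=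
  f.sum fun a ca => g.sum fun b cb =>
    Finsupp.single (pmul a b) (ca * cb * ξ ^ floatCount a b)

/-- The twisted variant `S^ξ`: the subsemigroup of `(k[S], ∘)` generated by (the basis
elements corresponding to) `S`. -/
def TwistedVariant {n : ℕ} (ξ : K) (S : Set (PElt n)) : Set (PAlg n K) :=
  ⋂₀ {T : Set (PAlg n K) | (∀ a ∈ S, Finsupp.single a (1 : K) ∈ T) ∧
      ∀ f ∈ T, ∀ g ∈ T, twistMul ξ f g ∈ T}

/-- The idempotents of a set of elements of the twisted algebra. -/
def EsetTwist {n : ℕ} (ξ : K) (X : Set (PAlg n K)) : Set (PAlg n K) :=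
  {f ∈ X | twistMul ξ f f = f}

/-- `⟨S^ξ, ξ·1⟩ = {ξ^i·α : i ∈ ℕ, α ∈ S}`. -/
def TwistNat {n : ℕ} (ξ : K) (S : Set (PElt n)) : Set (PAlg n K) :=
  {f | ∃ (i : ℕ), ∃ a ∈ S, f = Finsupp.single a (ξ ^ i)}

/-- `⟨S^ξ, ξ·1, ξ⁻¹·1⟩ = {ξ^i·α : i ∈ ℤ, α ∈ S}`. -/
def TwistInt {n : ℕ} (ξ : K) (S : Set (PElt n)) : Set (PAlg n K) :=
  {f | ∃ (i : ℤ), ∃ a ∈ S, f = Finsupp.single a (ξ ^ i)}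

/-! ### Idempotent statistics of the Jones monoid -/

/-- The number of cycle components of `Γ(a)`. -/
noncomputable def numCycles {n : ℕ} (a : PElt n) : ℕ :=
  Nat.card {θ : Set (Fin n) // IsCycleComp a θ}

/-- The number of path components of `Γ(a)`. -/
noncomputable def numPaths {n : ℕ} (a : PElt n) : ℕ :=
  Nat.card {θ : Set (Fin n) // IsPathComp a θ}

/-- `E_{n;c,p}`: the idempotents of the Jones monoid `J_n` with `c` cycle components and
`p` path components (out-of-range indices give the empty set). -/
def EJcp (n : ℕ) (c p : ℤ) : Set (PElt n) :=
  {a ∈ Jones n | pmul a a = a ∧ (numCycles a : ℤ) = c ∧ (numPaths a : ℤ) = p}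

/-- `e_{n;c,p} = |E_{n;c,p}|`. -/
noncomputable def eJ (n : ℕ) (c p : ℤ) : ℕ := Nat.card (EJcp n c p)

/-- `e_{n;·,p} = Σ_c e_{n;c,p}`: the number of idempotents of `J_n` of rank `p`. -/
noncomputable def eJdot (n : ℕ) (p : ℤ) : ℕ :=
  Nat.card {a : PElt n | a ∈ Jones n ∧ pmul a a = a ∧ (numPaths a : ℤ) = p}

/-- `S^{(1)}_{n;c,p} = Σ_{α ∈ E_{n;c,p}} Σ_{θ ∈ Θ(α)} (u_θ + l_θ)`. -/
noncomputable def S1 (n : ℕ) (c p : ℤ) : ℕ :=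
  ∑ᶠ a ∈ EJcp n c p, ∑ᶠ θ ∈ ThetaSet a, (uRet a θ + lRet a θ)

/-- `S^{(2)}_{n;c,p} = Σ_{α ∈ E_{n;c,p}} Σ_{θ₁ ≠ θ₂ ∈ Θ(α)} u_{θ₁}·l_{θ₂}`
(the inner sum over ordered pairs of distinct cycles). -/
noncomputable def S2 (n : ℕ) (c p : ℤ) : ℕ :=
  ∑ᶠ a ∈ EJcp n c p, ∑ᶠ q ∈ {q : Set (Fin n) × Set (Fin n) |
      q.1 ∈ ThetaSet a ∧ q.2 ∈ ThetaSet a ∧ q.1 ≠ q.2}, uRet a q.1 * lRet a q.2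

/-- `S^{(1)}_{n;·,p}`. -/
noncomputable def S1dot (n : ℕ) (p : ℤ) : ℕ :=
  ∑ᶠ a ∈ {a : PElt n | a ∈ Jones n ∧ pmul a a = a ∧ (numPaths a : ℤ) = p},
    ∑ᶠ θ ∈ ThetaSet a, (uRet a θ + lRet a θ)

/-- `S^{(2)}_{n;·,p}`. -/
noncomputable def S2dot (n : ℕ) (p : ℤ) : ℕ :=
  ∑ᶠ a ∈ {a : PElt n | a ∈ Jones n ∧ pmul a a = a ∧ (numPaths a : ℤ) = p},
    ∑ᶠ q ∈ {q : Set (Fin n) × Set (Fin n) |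
      q.1 ∈ ThetaSet a ∧ q.2 ∈ ThetaSet a ∧ q.1 ≠ q.2}, uRet a q.1 * lRet a q.2

/-- Labels for the blocks of the projection with blocks `{i,j}`, `{i′,j′}` and `{k,k′}`. -/
def projLab {n : ℕ} (i j : Fin n) : PV n → Fin n ⊕ Bool
  | .inl k => if k = i ∨ k = j then .inr true else .inl k
  | .inr k => if k = i ∨ k = j then .inr false else .inl k

/-- The projection with blocks `{i,j}`, `{i′,j′}` and `{k,k′}` for the other `k`. -/
def projElt {n : ℕ} (i j : Fin n) : PElt n := Setoid.ker (projLab i j)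

/-- The partner of a vertex in the projection. -/
def projPartner {n : ℕ} (i j : Fin n) : PV n → PV n
  | .inl k => if k = i then .inl j else if k = j then .inl i else .inr k
  | .inr k => if k = i then .inr j else if k = j then .inr i else .inl k

theorem projElt_r {n : ℕ} (i j : Fin n) (x y : PV n) :
    (projElt i j).r x y ↔ y = x ∨ y = projPartner i j x := by
  change projLab i j x = projLab i j y ↔ _
  rcases x with x | x <;> rcases y with y | y <;>
    simp only [projLab, projPartner] <;> split_ifs <;> simp <;> grind

theorem projElt_blockCard {n : ℕ} (i j : Fin n) (x : PV n) :
    blockCard (projElt i j) x = ({x, projPartner i j x} : Set (PV n)).ncard := by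
  unfold blockCard
  rw [← Nat.card_coe_set_eq]
  congr 1
  have : (fun y => (projElt i j).r x y) = fun y => y ∈ ({x, projPartner i j x} : Set (PV n)) := by
    funext y
    rw [projElt_r]; simp
  simp only [this]

theorem projElt_planar {n : ℕ} (i j : Fin n) (h : j.val = i.val ∨ j.val = i.val + 1) :
    IsPlanar (projElt i j) := by
  rintro ⟨w, x, y, z, h1, h2, h3, hwy, hxz, hwx⟩
  rw [projElt_r] at hwy hxz hwx
  push Not at hwx
  have hy : y = projPartner i j w := by
    rcases hwy with rfl | h
    · omega
    · exact h
  have hz : z = projPartner i j x := by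
    rcases hxz with rfl | h
    · omega
    · exact h
  subst hy hz
  have hi := i.2
  have hj := j.2
  rcases w with w | w <;> rcases x with x | x <;> have hw := w.2 <;> have hx := x.2 <;>
    simp only [projPartner] at * <;> split_ifs at * <;>
    simp only [ordIdx, Fin.ext_iff] at * <;> omega

theorem projElt_motzkin {n : ℕ} (i j : Fin n) (h : j.val = i.val ∨ j.val = i.val + 1) :
    projElt i j ∈ Motzkin n := by
  refine ⟨projElt_planar i j h, fun x => ?_⟩
  rw [projElt_blockCard]
  exact (Set.ncard_insert_le _ _).trans (by rw [Set.ncard_singleton])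

theorem projElt_jones {n : ℕ} (i j : Fin n) (h : j.val = i.val + 1) :
    projElt i j ∈ Jones n := by
  refine ⟨projElt_planar i j (Or.inr h), fun x => ?_⟩
  rw [projElt_blockCard]
  apply Set.ncard_pair
  have hij : i ≠ j := by
    intro e; rw [e] at h; omega
  rcases x with x | x <;> simp only [projPartner] <;> split_ifs <;> simp <;> grind

theorem block_three {n : ℕ} {a : PElt n} {x y z : PV n} (h : blockCard a x ≤ 2)
    (hy : a.r x y) (hz : a.r x z) (hxy : x ≠ y) (hxz : x ≠ z) (hyz : y ≠ z) : False := by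
  have h3 : ({x, y, z} : Set (PV n)).ncard = 3 := Set.ncard_eq_three.2 ⟨x, y, z, hxy, hxz, hyz, rfl⟩
  have hsub : ({x, y, z} : Set (PV n)) ⊆ {w | a.r x w} := by
    rintro w (rfl | rfl | rfl)
    · exact a.refl' _
    · exact hy
    · exact hz
  have := Set.ncard_le_ncard hsub (Set.toFinite _)
  have e : ({w | a.r x w} : Set (PV n)).ncard = blockCard a x := by
    rw [← Nat.card_coe_set_eq]; rfl
  omega

/-- Labels for the components of the stacked graph of the projection on `a`. -/
def stackLab {n : ℕ} (a : PElt n) (i j : Fin n) : TV n → Option (Quotient a)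
  | .inl k => some (Quotient.mk a (.inl k))
  | .inr (.inl k) => if k = i ∨ k = j then none else some (Quotient.mk a (.inl k))
  | .inr (.inr k) => some (Quotient.mk a (.inr k))

theorem stackLab_out {n : ℕ} (a : PElt n) (i j : Fin n) (p : PV n) :
    stackLab a i j (outEmb p) = some (Quotient.mk a p) := by
  rcases p with p | p <;> rfl

theorem stack_eq {n : ℕ} (a : PElt n) (i j : Fin n)
    (hA : ∀ k, (k = i ∨ k = j) → ∀ y, a.r (.inl k) y ↔ (y = .inl i ∨ y = .inl j)) :
    stackSetoid (projElt i j) a = Setoid.ker (stackLab a i j) := by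
  have hq : ∀ p q : PV n, a.r p q ↔ Quotient.mk a p = Quotient.mk a q :=
    fun p q => (Quotient.eq (r := a)).symm
  have hij : Quotient.mk a (.inl i) = Quotient.mk a (.inl j) :=
    (hq _ _).1 ((hA i (Or.inl rfl) _).2 (Or.inr rfl))
  apply le_antisymm
  · intro x y hxy
    refine Setoid.eqvGen_le (s := Setoid.ker (stackLab a i j)) ?_ hxy
    rintro x y (⟨p, q, h, rfl, rfl⟩ | ⟨p, q, h, rfl, rfl⟩)
    · change projLab i j p = projLab i j q at h
      change stackLab a i j _ = stackLab a i j _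
      rcases p with p | p <;> rcases q with q | q <;>
        simp only [projLab, upEmb, stackLab] at * <;> split_ifs at * <;> simp at * <;> grind
    · change stackLab a i j _ = stackLab a i j _
      have key : ∀ p : PV n, stackLab a i j (downEmb p) =
          open Classical in if a.r (.inl i) p then none else some (Quotient.mk a p) := by
        intro p
        rw [hA i (Or.inl rfl)]
        rcases p with p | p <;> simp [downEmb, stackLab]
      rw [key, key]
      have : a.r (.inl i) p ↔ a.r (.inl i) q :=
        ⟨fun h' => a.trans' h' h, fun h' => a.trans' h' (a.symm' h)⟩
      by_cases h' : a.r (.inl i) p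
      · rw [if_pos h', if_pos (this.1 h')]
      · rw [if_neg h', if_neg (fun h2 => h' (this.2 h2)), (hq p q).1 h]
  · have up : ∀ p q, (projElt i j).r p q → (stackSetoid (projElt i j) a).r (upEmb p) (upEmb q) :=
      fun p q h => EqvGen.rel _ _ (Or.inl ⟨p, q, h, rfl, rfl⟩)
    have down : ∀ p q, a.r p q → (stackSetoid (projElt i j) a).r (downEmb p) (downEmb q) :=
      fun p q h => EqvGen.rel _ _ (Or.inr ⟨p, q, h, rfl, rfl⟩)
    have tm : ∀ k, ¬ (k = i ∨ k = j) → (stackSetoid (projElt i j) a).r (.inl k) (.inr (.inl k)) := by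
      intro k hk
      refine up (.inl k) (.inr k) ?_
      change projLab i j _ = projLab i j _
      simp [projLab, hk]
    have out : ∀ p q, a.r p q → (stackSetoid (projElt i j) a).r (outEmb p) (outEmb q) := by
      intro p q h
      by_cases hp : a.r (.inl i) p
      · have hq' := a.trans' hp h
        have hp' := (hA i (Or.inl rfl) _).1 hp
        have hq'' := (hA i (Or.inl rfl) _).1 hq'
        have : (projElt i j).r p q := by
          change projLab i j _ = projLab i j _
          rcases hp' with rfl | rfl <;> rcases hq'' with rfl | rfl <;> simp [projLab]
        have := up p q this
        rcases hp' with rfl | rfl <;> rcases hq'' with rfl | rfl <;> exact this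
      · have hod : ∀ p, ¬ a.r (.inl i) p →
            (stackSetoid (projElt i j) a).r (outEmb p) (downEmb p) := by
          intro p hp
          rw [hA i (Or.inl rfl)] at hp
          rcases p with p | p
          · exact tm p (by simpa using hp)
          · exact Setoid.refl' _ _
        have hq' : ¬ a.r (.inl i) q := fun h' => hp (a.trans' h' (a.symm' h))
        exact Setoid.trans' _ (hod p hp) (Setoid.trans' _ (down p q h) (Setoid.symm' _ (hod q hq')))
    have rep : ∀ x : TV n, stackLab a i j x ≠ none →
        ∃ p, (stackSetoid (projElt i j) a).r x (outEmb p) ∧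
          stackLab a i j x = some (Quotient.mk a p) := by
      rintro (k | k | k) hx
      · exact ⟨.inl k, Setoid.refl' _ _, rfl⟩
      · have hk : ¬ (k = i ∨ k = j) := by
          intro hk; simp [stackLab, hk] at hx
        exact ⟨.inl k, Setoid.symm' _ (tm k hk), by simp [stackLab, hk]⟩
      · exact ⟨.inr k, Setoid.refl' _ _, rfl⟩
    have repn : ∀ x : TV n, stackLab a i j x = none →
        (stackSetoid (projElt i j) a).r (.inr (.inl i)) x := by
      rintro (k | k | k) hx
      · simp [stackLab] at hx
      · have hk : k = i ∨ k = j := by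
          by_contra hk; simp [stackLab, hk] at hx
        refine down (.inl i) (.inl k) ?_
        rw [hA i (Or.inl rfl)]
        simpa using hk
      · simp [stackLab] at hx
    intro x y hxy
    change stackLab a i j x = stackLab a i j y at hxy
    by_cases hx : stackLab a i j x = none
    · exact Setoid.trans' _ (Setoid.symm' _ (repn x hx)) (repn y (hxy ▸ hx))
    · obtain ⟨p, hp, hp'⟩ := rep x hx
      obtain ⟨q, hq1, hq2⟩ := rep y (hxy ▸ hx)
      have : a.r p q := by
        rw [hq]
        rw [hp', hq2] at hxy
        exact Option.some.inj hxy
      exact Setoid.trans' _ hp (Setoid.trans' _ (out p q this) (Setoid.symm' _ hq1))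

theorem proj_mul {n : ℕ} (a : PElt n) (i j : Fin n)
    (hA : ∀ k, (k = i ∨ k = j) → ∀ y, a.r (.inl k) y ↔ (y = .inl i ∨ y = .inl j)) :
    pmul (projElt i j) a = a := by
  unfold pmul
  rw [stack_eq a i j hA]
  ext p q
  change stackLab a i j (outEmb p) = stackLab a i j (outEmb q) ↔ _
  rw [stackLab_out, stackLab_out, Option.some_inj]
  exact Quotient.eq (r := a)

theorem proj_float {n : ℕ} (a : PElt n) (i j : Fin n)
    (hA : ∀ k, (k = i ∨ k = j) → ∀ y, a.r (.inl k) y ↔ (y = .inl i ∨ y = .inl j)) :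
    floatCount (projElt i j) a = 1 := by
  unfold floatCount
  rw [stack_eq a i j hA]
  have hq : ∀ x y, Quotient.mk (Setoid.ker (stackLab a i j)) x = Quotient.mk _ y ↔
      stackLab a i j x = stackLab a i j y := fun x y => Quotient.eq (r := Setoid.ker _)
  rw [Nat.card_eq_one_iff_exists]
  refine ⟨⟨Quotient.mk _ (.inr (.inl i)), ?_⟩, ?_⟩
  · rintro (k | k | k) hx
    · rw [hq] at hx; simp [stackLab] at hx
    · trivial
    · rw [hq] at hx; simp [stackLab] at hx
  · rintro ⟨c, hc⟩
    apply Subtype.ext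
    change c = _
    induction c using Quotient.inductionOn with
    | h y =>
      rw [hq]
      have hy := hc y rfl
      rcases y with k | k | k
      · exact hy.elim
      · by_cases hk : k = i ∨ k = j
        · simp [stackLab, hk]
        · exact (hc (.inl k) ((hq _ _).2 (by simp [stackLab, hk]))).elim
      · exact hy.elim

theorem exists_proj {n : ℕ} {a : PElt n} (ha : a ∈ Motzkin n) (hne : a ≠ pid n) :
    (∃ i, inertDown a i) ∨ ∃ i j : Fin n, j.val = i.val + 1 ∧ a.r (.inl i) (.inl j) := by
  obtain ⟨hp, hb⟩ := ha
  by_cases hin : ∃ i, inertDown a i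
  · exact Or.inl hin
  right
  by_cases hup : ∃ d : ℕ, ∃ i j : Fin n, j.val = i.val + 1 + d ∧ a.r (.inl i) (.inl j)
  · classical
    obtain ⟨i, j, hij, hr⟩ := Nat.find_spec hup
    have hmin := fun m => Nat.find_min hup (m := m)
    generalize Nat.find hup = d at *
    rcases Nat.eq_zero_or_pos d with rfl | hd
    · exact ⟨i, j, hij, hr⟩
    exfalso
    have hj := j.2
    let k : Fin n := ⟨i.val + 1, by omega⟩
    have hk : k.val = i.val + 1 := rfl
    have hkn : ¬ inertDown a k := fun h => hin ⟨k, h⟩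
    unfold inertDown at hkn
    push Not at hkn
    obtain ⟨y, hy, hyk⟩ := hkn
    have hik : ¬ a.r (.inl i) (.inl k) := fun h => by
      refine block_three (hb _) hr h ?_ ?_ ?_ <;> simp [Fin.ext_iff] <;> omega
    rcases y with m | m
    · have hmk : m.val ≠ k.val := fun h => hyk (by rw [Fin.ext h])
      have hmi : m ≠ i := by
        rintro rfl; exact hik (a.symm' hy)
      have hmj : m ≠ j := by
        rintro rfl; exact hik (a.trans' hr (a.symm' hy))
      rw [Ne, Fin.ext_iff] at hmi hmj
      by_cases h1 : m.val < i.val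
      · refine hp ⟨.inl m, .inl i, .inl k, .inl j, ?_, ?_, ?_, a.symm' hy, hr, ?_⟩
        · simpa [ordIdx] using h1
        · simp [ordIdx, hk]
        · simp [ordIdx]; omega
        · intro h; exact hik (a.trans' (a.symm' h) (a.symm' hy))
      by_cases h2 : j.val < m.val
      · refine hp ⟨.inl i, .inl k, .inl j, .inl m, ?_, ?_, ?_, hr, hy, hik⟩
        · simp [ordIdx, hk]
        · simp [ordIdx]; omega
        · simp [ordIdx]; omega
      · refine hmin (m.val - k.val - 1) (by omega) ⟨k, m, by omega, hy⟩
    · have hm := m.2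
      refine hp ⟨.inl i, .inl k, .inl j, .inr m, ?_, ?_, ?_, hr, hy, hik⟩
      · simp [ordIdx, hk]
      · simp [ordIdx]; omega
      · simp [ordIdx]; omega
  · exfalso
    have hup' : ∀ i j : Fin n, a.r (.inl i) (.inl j) → i = j := by
      intro i j h
      by_contra hij
      rcases lt_or_gt_of_ne hij with h1 | h1
      · exact hup ⟨j.val - i.val - 1, i, j, by have := Fin.lt_def.1 h1; omega, h⟩
      · exact hup ⟨i.val - j.val - 1, j, i, by have := Fin.lt_def.1 h1; omega, a.symm' h⟩
    have hex : ∀ i : Fin n, ∃ m : Fin n, a.r (.inl i) (.inr m) := by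
      intro i
      have h : ¬ inertDown a i := fun h => hin ⟨i, h⟩
      unfold inertDown at h
      push Not at h
      obtain ⟨y, hy, hyk⟩ := h
      rcases y with m | m
      · exact (hyk (by rw [hup' i m hy])).elim
      · exact ⟨m, hy⟩
    choose f hf using hex
    have hmono : StrictMono f := by
      intro i k hik
      by_contra hlt
      have hne' : ¬ a.r (.inl i) (.inl k) := fun h => hik.ne (hup' _ _ h)
      rcases (not_lt.1 hlt).lt_or_eq with h | h
      · have h1 := Fin.lt_def.1 hik
        have h2 := Fin.lt_def.1 h
        have h3 := (f i).2
        have h4 := k.2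
        refine hp ⟨.inl i, .inl k, .inr (f i), .inr (f k), ?_, ?_, ?_, hf i, hf k, hne'⟩ <;>
          simp only [ordIdx] <;> omega
      · apply hne'
        refine a.trans' (hf i) ?_
        rw [← h]
        exact a.symm' (hf k)
    have hid : f = id := by
      have hs := Finite.injective_iff_surjective.1 hmono.injective
      have := Subsingleton.elim (hmono.orderIsoOfSurjective f hs) (OrderIso.refl (Fin n))
      funext x
      exact congrArg (fun e : Fin n ≃o Fin n => e x) this
    subst hid
    apply hne
    have hto : ∀ x : PV n, a.r (.inl (Sum.elim id id x)) x := by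
      rintro (x | x)
      · exact a.refl' _
      · exact hf x
    ext x y
    change a.r x y ↔ Sum.elim id id x = Sum.elim id id y
    constructor
    · intro h
      exact hup' _ _ (a.trans' (hto x) (a.trans' h (a.symm' (hto y))))
    · intro h
      have := hto x
      rw [h] at this
      exact a.trans' (a.symm' this) (hto y)

theorem mem_of_proj {K : Type} [Field K] {n : ℕ} {S : Set (PElt n)} (ξ : K) {a : PElt n}
    (ha : a ∈ S) (i j : Fin n) (hS : projElt i j ∈ S)
    (hA : ∀ k, (k = i ∨ k = j) → ∀ y, a.r (.inl k) y ↔ (y = .inl i ∨ y = .inl j)) :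
    Finsupp.single a ξ ∈ TwistedVariant ξ S := by
  rintro T ⟨hT1, hT2⟩
  have h := hT2 _ (hT1 _ hS) _ (hT1 _ ha)
  have e : twistMul ξ (Finsupp.single (projElt i j) (1 : K)) (Finsupp.single a 1)
      = Finsupp.single a ξ := by
    unfold twistMul
    rw [Finsupp.sum_single_index, Finsupp.sum_single_index, proj_mul a i j hA,
      proj_float a i j hA]
    · simp
    · simp
    · simp
  rwa [e] at h

/-- Lemma 4.2. Let `S` be `M_n` or `J_n`, `k` a field and `ξ ∈ k∖{0}`.
If `α ∈ S` is not the identity, then `ξ·α ∈ S^ξ`. -/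
theorem xi_smul_mem_twisted {K : Type} [Field K] (n : ℕ) (S : Set (PElt n))
    (hS : S = Motzkin n ∨ S = Jones n) (ξ : K) (hξ : ξ ≠ 0)
    (a : PElt n) (ha : a ∈ S) (hne : a ≠ pid n) :
    Finsupp.single a ξ ∈ TwistedVariant ξ S := by
  have haM : a ∈ Motzkin n := by
    rcases hS with rfl | rfl
    · exact ha
    · exact ⟨ha.1, fun x => (ha.2 x).le⟩
  rcases exists_proj haM hne with ⟨i, hi⟩ | ⟨i, j, hij, hr⟩
  · rcases hS with rfl | rfl
    · refine mem_of_proj ξ ha i i (projElt_motzkin i i (Or.inl rfl)) ?_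
      intro k hk y
      obtain rfl : k = i := by simpa using hk
      rw [or_self]
      exact ⟨hi y, fun h => h ▸ a.refl' _⟩
    · exfalso
      have h2 := ha.2 (.inl i)
      have : Subsingleton {y : PV n // a.r (.inl i) y} :=
        ⟨fun x y => Subtype.ext ((hi _ x.2).trans (hi _ y.2).symm)⟩
      have := Finite.card_le_one_iff_subsingleton.2 this
      unfold blockCard at h2
      omega
  · have hP : projElt i j ∈ S := by
      rcases hS with rfl | rfl
      · exact projElt_motzkin i j (Or.inr hij)
      · exact projElt_jones i j hij
    refine mem_of_proj ξ ha i j hP ?_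
    have hne' : i ≠ j := by
      intro e; rw [e] at hij; omega
    have main : ∀ y, a.r (.inl i) y ↔ (y = .inl i ∨ y = .inl j) := by
      intro y
      constructor
      · intro h
        by_contra hy
        push Not at hy
        exact block_three (haM.2 _) hr h (by simpa using hne') hy.1.symm hy.2.symm
      · rintro (rfl | rfl)
        · exact a.refl' _
        · exact hr
    intro k hk y
    rw [← main]
    rcases hk with rfl | rfl
    · exact Iff.rfl
    · exact ⟨fun h => a.trans' hr h, fun h => a.trans' (a.symm' hr) h⟩
end

section
/- Let S be the Motzkin monoid M_n or the Jones monoid J_n, let k be a field and ξ ∈ k ∖ {0}. Then the twisted variant satisfies S^ξ = {1} ∪ {ξ^i·α : i ∈ ℕ, α ∈ S ∖ {1}}. -/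
open Relation

/-! ### Twisted semigroup algebras -/

variable {K : Type} [Field K]

/-! ### Basic facts on blocks -/

theorem blockCard_eq_ncard {n : ℕ} (a : PElt n) (x : PV n) :
    blockCard a x = Set.ncard {y | a.r x y} := rfl

theorem blockCard_le_two_iff {n : ℕ} (a : PElt n) (x : PV n) :
    blockCard a x ≤ 2 ↔ ∀ y z, a.r x y → a.r x z → y = x ∨ z = x ∨ y = z := by
  rw [blockCard_eq_ncard, ← not_lt, Set.two_lt_ncard_iff (Set.toFinite _)]
  constructor
  · intro h y z hy hz
    by_contra hc
    push Not at hc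
    exact h ⟨x, y, z, a.refl x, hy, hz, hc.1.symm, hc.2.1.symm, hc.2.2⟩
  · rintro h ⟨u, v, w, hu, hv, hw, h1, h2, h3⟩
    simp only [Set.mem_ofPred_eq] at hu hv hw
    have e1 := h u v hu hv
    have e2 := h u w hu hw
    have e3 := h v w hv hw
    grind

theorem blockCard_eq_two_iff {n : ℕ} (a : PElt n) (x : PV n) :
    blockCard a x = 2 ↔ blockCard a x ≤ 2 ∧ ∃ y, y ≠ x ∧ a.r x y := by
  have h1 : (∃ y, y ≠ x ∧ a.r x y) ↔ 1 < blockCard a x := by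
    rw [blockCard_eq_ncard, Set.one_lt_ncard_iff (Set.toFinite _)]
    constructor
    · rintro ⟨y, hy, h⟩
      exact ⟨y, x, h, a.refl x, hy⟩
    · rintro ⟨u, v, hu, hv, huv⟩
      by_cases h : u = x
      · exact ⟨v, fun h' => huv (h.trans h'.symm), hv⟩
      · exact ⟨u, h, hu⟩
  rw [h1]
  omega

/-- A partner function for a partition with blocks of size at most two. -/
theorem exists_partner {n : ℕ} (a : PElt n) (ha : ∀ x, blockCard a x ≤ 2) :
    ∃ f : PV n → PV n, (∀ x y, a.r x y ↔ y = x ∨ y = f x) ∧ ∀ x, f (f x) = x := by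
  classical
  have key : ∀ x, ∃ z, ∀ y, a.r x y ↔ y = x ∨ y = z := by
    intro x
    have hx := (blockCard_le_two_iff a x).1 (ha x)
    by_cases h : ∃ z, z ≠ x ∧ a.r x z
    · obtain ⟨z, hz, hxz⟩ := h
      refine ⟨z, fun y => ⟨fun hy => ?_, ?_⟩⟩
      · rcases hx y z hy hxz with h | h | h
        · exact Or.inl h
        · exact absurd h hz
        · exact Or.inr h
      · rintro (rfl | rfl)
        · exact a.refl _
        · exact hxz
    · push Not at h
      refine ⟨x, fun y => ⟨fun hy => ?_, ?_⟩⟩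
      · by_contra hc
        exact h y (fun e => hc (Or.inl e)) hy
      · rintro (rfl | rfl) <;> exact a.refl _
  choose f hf using key
  refine ⟨f, hf, fun x => ?_⟩
  have h1 : a.r x (f x) := (hf x _).2 (Or.inr rfl)
  have h2 : a.r (f x) x := a.symm h1
  have h3 : a.r (f x) (f (f x)) := (hf _ _).2 (Or.inr rfl)
  have h4 : a.r x (f (f x)) := a.trans h1 h3
  have e2 := (hf _ _).1 h2
  have e4 := (hf _ _).1 h4
  grind

theorem ordIdx_inj {n : ℕ} {x y : PV n} (h : ordIdx n x = ordIdx n y) : x = y := by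
  rcases x with x | x <;> rcases y with y | y <;> simp only [ordIdx] at h
  · rw [Fin.ext h]
  · omega
  · omega
  · congr 1
    ext
    omega

/-! ### Degree counting -/

theorem comp_degree_bound {V : Type} [Fintype V] (G : SimpleGraph V) (w : V)
    (P : Finset V) (hP : ∀ x, x ∈ P ↔ G.Reachable w x) (D : V → ℕ)
    (N : V → Finset V) (hN : ∀ x y, G.Adj x y → y ∈ N x) (hD : ∀ x, (N x).card ≤ D x) :
    2 * P.card ≤ ∑ x ∈ P, D x + 2 := by
  classical
  set H : SimpleGraph P := G.induce (P : Set V) with hH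
  have hconn : H.Connected := by
    have h1 : (P : Set V) = (G.connectedComponentMk w).supp := by
      ext x
      simp only [Finset.mem_coe, hP, SimpleGraph.ConnectedComponent.mem_supp_iff,
        SimpleGraph.ConnectedComponent.eq]
      exact ⟨fun h => h.symm, fun h => h.symm⟩
    have h2 : (G.induce (P : Set V)).Connected := by
      rw [h1]
      exact (G.connectedComponentMk w).connected_toSimpleGraph
    exact h2
  have h1 := hconn.card_vert_le_card_edgeSet_add_one
  have h2 := H.sum_degrees_eq_twice_card_edges
  rw [Nat.card_eq_fintype_card, Nat.card_eq_fintype_card, ← SimpleGraph.edgeFinset_card,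
    Fintype.card_coe] at h1
  have h3 : ∑ v : P, H.degree v ≤ ∑ v : P, D v := by
    refine Finset.sum_le_sum fun v _ => ?_
    refine le_trans ?_ (hD v)
    rw [← SimpleGraph.card_neighborFinset_eq_degree]
    refine Finset.card_le_card_of_injOn Subtype.val ?_ Subtype.val_injective.injOn
    intro u hu
    simp only [Finset.mem_coe, SimpleGraph.mem_neighborFinset] at hu
    exact hN _ _ hu
  rw [Finset.sum_coe_sort P D] at h3
  omega

/-! ### Linking numbers modulo two -/

/-- Pairing up a sum along a fixed-point-free involution. -/
theorem sum_involution_pair {n : ℕ} (f : PV n → PV n) (hf : ∀ x, f (f x) = x)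
    (A : Finset (PV n)) (hA : ∀ x ∈ A, f x ∈ A) (hfix : ∀ x ∈ A, f x ≠ x) (h : PV n → ZMod 2) :
    ∑ u ∈ A, h u = ∑ u ∈ A with ordIdx n u < ordIdx n (f u), (h u + h (f u)) := by
  classical
  rw [Finset.sum_add_distrib,
    ← Finset.sum_filter_add_sum_filter_not A (fun u => ordIdx n u < ordIdx n (f u))]
  congr 1
  refine Finset.sum_nbij' f f ?_ ?_ ?_ ?_ ?_
  · intro u hu
    simp only [Finset.mem_filter, hf] at hu ⊢
    refine ⟨hA u hu.1, ?_⟩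
    have : ordIdx n u ≠ ordIdx n (f u) := fun e => hfix u hu.1 (ordIdx_inj e).symm
    omega
  · intro u hu
    simp only [Finset.mem_filter, hf] at hu ⊢
    exact ⟨hA u hu.1, by omega⟩
  · intro u _
    exact hf u
  · intro u _
    exact hf u
  · intro u _
    rw [hf]

theorem card_even_of_involution {n : ℕ} (f : PV n → PV n) (hf : ∀ x, f (f x) = x)
    (A : Finset (PV n)) (hA : ∀ x ∈ A, f x ∈ A) (hfix : ∀ x ∈ A, f x ≠ x) :
    (A.card : ZMod 2) = 0 := by
  have := sum_involution_pair f hf A hA hfix (fun _ => 1)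
  rw [Finset.sum_const, nsmul_eq_mul, mul_one] at this
  rw [this]
  exact Finset.sum_eq_zero fun _ _ => by decide

/-- The linking number modulo two of two sets of boundary points. -/
def lkNum {n : ℕ} (A B : Finset (PV n)) : ZMod 2 :=
  ∑ u ∈ A, ∑ v ∈ B, if ordIdx n u < ordIdx n v then 1 else 0

theorem lkNum_eq_zero {n : ℕ} (a : PElt n) (ha : IsPlanar a) (f : PV n → PV n)
    (hr : ∀ x y, a.r x y ↔ y = x ∨ y = f x) (hf : ∀ x, f (f x) = x)
    (A B : Finset (PV n)) (hA : ∀ x ∈ A, f x ∈ A) (hAfix : ∀ x ∈ A, f x ≠ x)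
    (hB : ∀ x ∈ B, f x ∈ B) (hBfix : ∀ x ∈ B, f x ≠ x) (hAB : ∀ x ∈ A, x ∉ B) :
    lkNum A B = 0 := by
  classical
  unfold lkNum
  rw [sum_involution_pair f hf A hA hAfix]
  refine Finset.sum_eq_zero fun u hu => ?_
  rw [← Finset.sum_add_distrib, sum_involution_pair f hf B hB hBfix]
  refine Finset.sum_eq_zero fun v hv => ?_
  simp only [Finset.mem_filter] at hu hv
  have hne : ∀ x ∈ A, ∀ y ∈ B, ordIdx n x ≠ ordIdx n y := by
    intro x hx y hy e
    exact hAB x hx (ordIdx_inj e ▸ hy)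
  have e1 := hne u hu.1 v hv.1
  have e2 := hne u hu.1 (f v) (hB v hv.1)
  have e3 := hne (f u) (hA u hu.1) v hv.1
  have e4 := hne (f u) (hA u hu.1) (f v) (hB v hv.1)
  have huv : ¬ a.r u v := by
    rw [hr]
    rintro (rfl | rfl)
    · exact e1 rfl
    · exact e3 rfl
  have hvu : ¬ a.r v u := fun h => huv (a.symm h)
  have n1 : ¬ (ordIdx n u < ordIdx n v ∧ ordIdx n v < ordIdx n (f u) ∧
      ordIdx n (f u) < ordIdx n (f v)) := fun h =>
    ha ⟨u, v, f u, f v, h.1, h.2.1, h.2.2, (hr _ _).2 (Or.inr rfl), (hr _ _).2 (Or.inr rfl), huv⟩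
  have n2 : ¬ (ordIdx n v < ordIdx n u ∧ ordIdx n u < ordIdx n (f v) ∧
      ordIdx n (f v) < ordIdx n (f u)) := fun h =>
    ha ⟨v, u, f v, f u, h.1, h.2.1, h.2.2, (hr _ _).2 (Or.inr rfl), (hr _ _).2 (Or.inr rfl), hvu⟩
  obtain ⟨_, hu2⟩ := hu
  obtain ⟨_, hv2⟩ := hv
  split_ifs <;> first | rfl | (exfalso; omega)

/-- Number (mod 2) of increasing pairs. -/
def incNum {n : ℕ} (p q : Finset (Fin n)) : ZMod 2 :=
  ∑ i ∈ p, ∑ j ∈ q, if i < j then 1 else 0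

theorem lkNum_disjSum {n : ℕ} (p1 p2 q1 q2 : Finset (Fin n)) :
    lkNum (p1.disjSum p2) (q1.disjSum q2) =
      incNum p1 q1 + p1.card * q2.card + incNum q2 p2 := by
  have h12 : ∀ i j : Fin n, i.val < 2 * n - 1 - j.val := fun i j => by omega
  have h21 : ∀ i j : Fin n, ¬ (2 * n - 1 - i.val < j.val) := fun i j => by omega
  have h22 : ∀ i j : Fin n, (2 * n - 1 - i.val < 2 * n - 1 - j.val) ↔ j < i := fun i j => by
    rw [Fin.lt_def]
    omega
  unfold lkNum incNum
  simp only [Finset.sum_disjSum, ordIdx, h12, h21, h22, if_true, if_false,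
    Finset.sum_add_distrib, Finset.sum_const, nsmul_eq_mul, mul_one, mul_zero,
    Fin.val_fin_lt]
  rw [Finset.sum_comm (s := q2)]
  simp [add_assoc]

theorem incNum_add_swap {n : ℕ} (p q : Finset (Fin n)) (h : ∀ i ∈ p, i ∉ q) :
    incNum p q + incNum q p = p.card * q.card := by
  unfold incNum
  rw [Finset.sum_comm (s := q), ← Finset.sum_add_distrib]
  have : ∀ i ∈ p, ((∑ j ∈ q, if i < j then (1 : ZMod 2) else 0) +
      ∑ j ∈ q, if j < i then 1 else 0) = q.card := by
    intro i hi
    rw [← Finset.sum_add_distrib, Finset.sum_congr rfl (g := fun _ => (1 : ZMod 2))]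
    · simp
    · intro j hj
      have hij : i ≠ j := fun e => h i hi (e ▸ hj)
      rcases lt_or_gt_of_ne hij with h | h
      · simp [h, h.not_gt]
      · simp [h, h.not_gt]
  rw [Finset.sum_congr rfl this]
  simp

/-! ### The stacked graph -/

theorem stack_up {n : ℕ} {a b : PElt n} {p q : PV n} (h : a.r p q) :
    (stackSetoid a b).r (upEmb p) (upEmb q) :=
  EqvGen.rel _ _ (Or.inl ⟨p, q, h, rfl, rfl⟩)

theorem stack_down {n : ℕ} {a b : PElt n} {p q : PV n} (h : b.r p q) :
    (stackSetoid a b).r (downEmb p) (downEmb q) :=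
  EqvGen.rel _ _ (Or.inr ⟨p, q, h, rfl, rfl⟩)

theorem stack_le {n : ℕ} {a b : PElt n} (t : Setoid (TV n))
    (h1 : ∀ p q, a.r p q → t.r (upEmb p) (upEmb q))
    (h2 : ∀ p q, b.r p q → t.r (downEmb p) (downEmb q)) {x y : TV n}
    (h : (stackSetoid a b).r x y) : t.r x y := by
  have h' : EqvGen (stackRel a b) x y := h
  clear h
  induction h' with
  | rel x y h =>
    rcases h with ⟨p, q, h, rfl, rfl⟩ | ⟨p, q, h, rfl, rfl⟩
    · exact h1 _ _ h
    · exact h2 _ _ h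
  | refl x => exact t.refl x
  | symm x y h ih => exact t.symm ih
  | trans x y z hxy hyz ih1 ih2 => exact t.trans ih1 ih2

theorem pmul_r {n : ℕ} {a b : PElt n} {x y : PV n} :
    (pmul a b).r x y ↔ (stackSetoid a b).r (outEmb x) (outEmb y) := Iff.rfl

/-- The stacked graph as a simple graph. -/
def stackGraph {n : ℕ} (a b : PElt n) : SimpleGraph (TV n) :=
  SimpleGraph.fromRel (stackRel a b)

theorem stackRel_symm {n : ℕ} {a b : PElt n} {x y : TV n} (h : stackRel a b x y) :
    stackRel a b y x := by
  rcases h with ⟨p, q, h, rfl, rfl⟩ | ⟨p, q, h, rfl, rfl⟩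
  · exact Or.inl ⟨q, p, a.symm h, rfl, rfl⟩
  · exact Or.inr ⟨q, p, b.symm h, rfl, rfl⟩

theorem stackGraph_adj {n : ℕ} {a b : PElt n} {x y : TV n} :
    (stackGraph a b).Adj x y ↔ x ≠ y ∧ stackRel a b x y := by
  unfold stackGraph
  rw [SimpleGraph.fromRel_adj]
  exact ⟨fun h => ⟨h.1, h.2.elim id stackRel_symm⟩, fun h => ⟨h.1, Or.inl h.2⟩⟩

theorem stackGraph_reachable {n : ℕ} {a b : PElt n} {x y : TV n} :
    (stackGraph a b).Reachable x y ↔ (stackSetoid a b).r x y := by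
  constructor
  · rintro ⟨p⟩
    induction p with
    | nil => exact (stackSetoid a b).refl _
    | cons h p ih =>
      exact (stackSetoid a b).trans (EqvGen.rel _ _ (stackGraph_adj.1 h).2) ih
  · intro h
    have h' : EqvGen (stackRel a b) x y := h
    clear h
    induction h' with
    | rel x y h =>
      by_cases e : x = y
      · rw [e]
      · exact (stackGraph_adj.2 ⟨e, h⟩).reachable
    | refl x => exact SimpleGraph.Reachable.refl _
    | symm x y h ih => exact ih.symm
    | trans x y z _ _ ih1 ih2 => exact ih1.trans ih2

theorem outEmb_injective {n : ℕ} : Function.Injective (outEmb (n := n)) := by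
  rintro (i | i) (j | j) h <;> simp_all [outEmb]

/-- A component of the stacked graph of two partial matchings has at most two outer vertices, and
if it has two then no vertex in it lacks a partner. -/
theorem comp_structure {n : ℕ} {a b : PElt n} {fa fb : PV n → PV n}
    (hra : ∀ x y, a.r x y ↔ y = x ∨ y = fa x) (hrb : ∀ x y, b.r x y ↔ y = x ∨ y = fb x)
    (w : TV n) (O : Finset (PV n)) (hO : ∀ x ∈ O, (stackSetoid a b).r w (outEmb x)) :
    O.card ≤ 2 ∧ (O.card = 2 →
      (∀ p, (stackSetoid a b).r w (upEmb p) → fa p ≠ p) ∧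
      (∀ p, (stackSetoid a b).r w (downEmb p) → fb p ≠ p)) := by
  classical
  let P : Finset (TV n) := Finset.univ.filter fun x => (stackSetoid a b).r w x
  have hP : ∀ x, x ∈ P ↔ (stackGraph a b).Reachable w x := by
    intro x
    rw [stackGraph_reachable]
    simp [P]
  -- neighbours on the two sides
  let NA : PV n → Finset (TV n) := fun p => if fa p = p then ∅ else {upEmb (fa p)}
  let NB : PV n → Finset (TV n) := fun p => if fb p = p then ∅ else {downEmb (fb p)}
  let ga : PV n → ℕ := fun p => if fa p = p then 1 else 0
  let gb : PV n → ℕ := fun p => if fb p = p then 1 else 0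
  have hNA : ∀ p, (NA p).card + ga p = 1 := by
    intro p
    simp only [NA, ga]
    split_ifs <;> simp
  have hNB : ∀ p, (NB p).card + gb p = 1 := by
    intro p
    simp only [NB, gb]
    split_ifs <;> simp
  let N : TV n → Finset (TV n) := fun x =>
    match x with
    | .inl i => NA (.inl i)
    | .inr (.inl i) => NA (.inr i) ∪ NB (.inl i)
    | .inr (.inr i) => NB (.inr i)
  let D : TV n → ℕ := fun x =>
    match x with
    | .inl i => (NA (.inl i)).card
    | .inr (.inl i) => (NA (.inr i)).card + (NB (.inl i)).card
    | .inr (.inr i) => (NB (.inr i)).card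
  let g : TV n → ℕ := fun x =>
    match x with
    | .inl i => ga (.inl i)
    | .inr (.inl i) => ga (.inr i) + gb (.inl i)
    | .inr (.inr i) => gb (.inr i)
  let o : TV n → ℕ := fun x =>
    match x with
    | .inl _ => 1
    | .inr (.inl _) => 0
    | .inr (.inr _) => 1
  have hadjA : ∀ p y, (∃ q, a.r p q ∧ y = upEmb q) → upEmb p ≠ y → y ∈ NA p := by
    rintro p y ⟨q, hq, rfl⟩ hne
    rcases (hra _ _).1 hq with rfl | rfl
    · exact absurd rfl hne
    · simp only [NA]
      rw [if_neg (fun e => hne (by rw [e]))]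
      simp
  have hadjB : ∀ p y, (∃ q, b.r p q ∧ y = downEmb q) → downEmb p ≠ y → y ∈ NB p := by
    rintro p y ⟨q, hq, rfl⟩ hne
    rcases (hrb _ _).1 hq with rfl | rfl
    · exact absurd rfl hne
    · simp only [NB]
      rw [if_neg (fun e => hne (by rw [e]))]
      simp
  have hN : ∀ x y, (stackGraph a b).Adj x y → y ∈ N x := by
    intro x y hxy
    obtain ⟨hne, h⟩ := stackGraph_adj.1 hxy
    clear hxy
    rcases h with ⟨p, q, h, rfl, rfl⟩ | ⟨p, q, h, rfl, rfl⟩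
    · have := hadjA p _ ⟨q, h, rfl⟩ hne
      rcases p with i | i
      · exact this
      · exact Finset.mem_union_left _ this
    · have := hadjB p _ ⟨q, h, rfl⟩ hne
      rcases p with i | i
      · exact Finset.mem_union_right _ this
      · exact this
  have hD : ∀ x, (N x).card ≤ D x := by
    rintro (i | i | i)
    · exact le_rfl
    · exact Finset.card_union_le _ _
    · exact le_rfl
  have hbound := comp_degree_bound (stackGraph a b) w P hP D N hN hD
  have hsum : ∑ x ∈ P, D x + ∑ x ∈ P, o x + ∑ x ∈ P, g x = 2 * P.card := by
    rw [← Finset.sum_add_distrib, ← Finset.sum_add_distrib, mul_comm, ← smul_eq_mul,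
      ← Finset.sum_const]
    refine Finset.sum_congr rfl ?_
    rintro (i | i | i) _
    · have := hNA (.inl i)
      simp only [D, o, g]
      omega
    · have := hNA (.inr i)
      have := hNB (.inl i)
      simp only [D, o, g]
      omega
    · have := hNB (.inr i)
      simp only [D, o, g]
      omega
  have hocard : O.card ≤ ∑ x ∈ P, o x := by
    rw [← Finset.card_image_of_injective O outEmb_injective, Finset.card_eq_sum_ones]
    calc ∑ x ∈ O.image outEmb, 1 = ∑ x ∈ O.image outEmb, o x := by
          refine Finset.sum_congr rfl ?_
          intro x hx
          obtain ⟨p, _, rfl⟩ := Finset.mem_image.1 hx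
          rcases p with i | i <;> rfl
      _ ≤ ∑ x ∈ P, o x := by
          refine Finset.sum_le_sum_of_subset ?_
          intro x hx
          obtain ⟨p, hp, rfl⟩ := Finset.mem_image.1 hx
          simp only [P, Finset.mem_filter, Finset.mem_univ, true_and]
          exact hO p hp
  refine ⟨by omega, fun h2 => ?_⟩
  have hg : ∑ x ∈ P, g x = 0 := by omega
  rw [Finset.sum_eq_zero_iff] at hg
  have hg' : ∀ x, (stackSetoid a b).r w x → g x = 0 := by
    intro x hx
    refine hg x ?_
    simp only [P, Finset.mem_filter, Finset.mem_univ, true_and]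
    exact hx
  constructor
  · intro p hp e
    have := hg' _ hp
    rcases p with i | i <;> simp [g, upEmb, ga, e] at this
  · intro p hp e
    have := hg' _ hp
    rcases p with i | i <;> simp [g, downEmb, gb, e] at this

/-! ### Closure under products -/

theorem pmul_blockCard_le {n : ℕ} {a b : PElt n} (ha : ∀ x, blockCard a x ≤ 2)
    (hb : ∀ x, blockCard b x ≤ 2) (x : PV n) : blockCard (pmul a b) x ≤ 2 := by
  classical
  obtain ⟨fa, hra, _⟩ := exists_partner a ha
  obtain ⟨fb, hrb, _⟩ := exists_partner b hb
  rw [blockCard_le_two_iff]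
  intro y z hy hz
  by_contra hc
  push Not at hc
  have h := (comp_structure hra hrb (outEmb x) {x, y, z} (by
    intro u hu
    simp only [Finset.mem_insert, Finset.mem_singleton] at hu
    rcases hu with rfl | rfl | rfl
    · exact (stackSetoid a b).refl _
    · exact hy
    · exact hz)).1
  rw [Finset.card_eq_three.2 ⟨x, y, z, hc.1.symm, hc.2.1.symm, hc.2.2, rfl⟩] at h
  omega

open Classical in
/-- The part of a component in one of the layers, seen through an embedding. -/
noncomputable def layerPart {n : ℕ} {X : Type} [Fintype X] (a b : PElt n) (w : TV n)
    (e : X → TV n) : Finset X :=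
  Finset.univ.filter fun x => (stackSetoid a b).r w (e x)

theorem mem_layerPart {n : ℕ} {X : Type} [Fintype X] {a b : PElt n} {w : TV n}
    {e : X → TV n} {x : X} : x ∈ layerPart a b w e ↔ (stackSetoid a b).r w (e x) := by
  simp [layerPart]

theorem layerPart_disjSum {n : ℕ} (a b : PElt n) (w : TV n) (e : PV n → TV n) :
    layerPart a b w e =
      (layerPart a b w fun i => e (.inl i)).disjSum (layerPart a b w fun i => e (.inr i)) := by
  ext x
  rcases x with i | i <;> simp [mem_layerPart]

/-- Parities of the three layers agree in a component without partnerless vertices. -/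
theorem layer_parity {n : ℕ} {a b : PElt n} {fa fb : PV n → PV n}
    (hra : ∀ x y, a.r x y ↔ y = x ∨ y = fa x) (hfa : ∀ x, fa (fa x) = x)
    (hrb : ∀ x y, b.r x y ↔ y = x ∨ y = fb x) (hfb : ∀ x, fb (fb x) = x) (w : TV n)
    (h1 : ∀ p, (stackSetoid a b).r w (upEmb p) → fa p ≠ p)
    (h2 : ∀ p, (stackSetoid a b).r w (downEmb p) → fb p ≠ p) :
    ((layerPart a b w fun i => .inl i).card : ZMod 2) +
        (layerPart a b w fun i => .inr (.inl i)).card = 0 ∧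
    ((layerPart a b w fun i => .inr (.inl i)).card : ZMod 2) +
        (layerPart a b w fun i => .inr (.inr i)).card = 0 := by
  have hA := card_even_of_involution fa hfa (layerPart a b w upEmb)
    (fun p hp => mem_layerPart.2 ((stackSetoid a b).trans (mem_layerPart.1 hp)
      (stack_up ((hra _ _).2 (Or.inr rfl))))) (fun p hp => h1 p (mem_layerPart.1 hp))
  have hB := card_even_of_involution fb hfb (layerPart a b w downEmb)
    (fun p hp => mem_layerPart.2 ((stackSetoid a b).trans (mem_layerPart.1 hp)
      (stack_down ((hrb _ _).2 (Or.inr rfl))))) (fun p hp => h2 p (mem_layerPart.1 hp))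
  rw [layerPart_disjSum, Finset.card_disjSum, Nat.cast_add] at hA hB
  exact ⟨hA, hB⟩

theorem pmul_partner {n : ℕ} {a b : PElt n} (ha : ∀ x, blockCard a x = 2)
    (hb : ∀ x, blockCard b x = 2) (x : PV n) : ∃ y, y ≠ x ∧ (pmul a b).r x y := by
  classical
  obtain ⟨fa, hra, hfa⟩ := exists_partner a (fun x => (ha x).le)
  obtain ⟨fb, hrb, hfb⟩ := exists_partner b (fun x => (hb x).le)
  have h1 : ∀ p, fa p ≠ p := by
    intro p e
    obtain ⟨y, hy, h⟩ := ((blockCard_eq_two_iff a p).1 (ha p)).2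
    rw [hra, e] at h
    exact hy (h.elim id id)
  have h2 : ∀ p, fb p ≠ p := by
    intro p e
    obtain ⟨y, hy, h⟩ := ((blockCard_eq_two_iff b p).1 (hb p)).2
    rw [hrb, e] at h
    exact hy (h.elim id id)
  obtain ⟨e1, e2⟩ := layer_parity hra hfa hrb hfb (outEmb x) (fun p _ => h1 p) (fun p _ => h2 p)
  by_contra hc
  push Not at hc
  have hO : layerPart a b (outEmb x) outEmb = {x} := by
    ext y
    rw [mem_layerPart, Finset.mem_singleton]
    constructor
    · intro h
      by_contra hne
      exact hc y hne h
    · rintro rfl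
      exact (stackSetoid a b).refl _
  have hcard : ((layerPart a b (outEmb x) outEmb).card : ZMod 2) = 1 := by
    rw [hO]
    simp
  rw [layerPart_disjSum, Finset.card_disjSum, Nat.cast_add] at hcard
  simp only [outEmb] at hcard e1 e2
  generalize ((layerPart a b _ fun i => Sum.inl i).card : ZMod 2) = u at *
  generalize ((layerPart a b _ fun i => Sum.inr (Sum.inl i)).card : ZMod 2) = v at *
  generalize ((layerPart a b _ fun i => Sum.inr (Sum.inr i)).card : ZMod 2) = t at *
  revert u v t
  decide

theorem pmul_planar {n : ℕ} {a b : PElt n} (hpa : IsPlanar a) (hpb : IsPlanar b)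
    (ha : ∀ x, blockCard a x ≤ 2) (hb : ∀ x, blockCard b x ≤ 2) : IsPlanar (pmul a b) := by
  classical
  rintro ⟨w, x, y, z, hwx, hxy, hyz, hwy, hxz, hnwx⟩
  have hble := pmul_blockCard_le ha hb
  obtain ⟨fa, hra, hfa⟩ := exists_partner a ha
  obtain ⟨fb, hrb, hfb⟩ := exists_partner b hb
  -- the outer part of a component with two outer vertices
  have hout : ∀ u v : PV n, u ≠ v → (pmul a b).r u v →
      layerPart a b (outEmb u) outEmb = {u, v} := by
    intro u v huv h
    ext t
    rw [mem_layerPart, Finset.mem_insert, Finset.mem_singleton]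
    constructor
    · intro ht
      rcases (blockCard_le_two_iff _ u).1 (hble u) t v ht h with e | e | e
      · exact Or.inl e
      · exact absurd e.symm huv
      · exact Or.inr e
    · rintro (rfl | rfl)
      · exact (stackSetoid a b).refl _
      · exact h
  have hfix : ∀ u v : PV n, u ≠ v → (pmul a b).r u v →
      (∀ p, (stackSetoid a b).r (outEmb u) (upEmb p) → fa p ≠ p) ∧
      (∀ p, (stackSetoid a b).r (outEmb u) (downEmb p) → fb p ≠ p) := by
    intro u v huv h
    refine (comp_structure hra hrb (outEmb u) {u, v} ?_).2 (Finset.card_pair huv)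
    intro t ht
    rw [Finset.mem_insert, Finset.mem_singleton] at ht
    rcases ht with rfl | rfl
    · exact (stackSetoid a b).refl _
    · exact h
  have nwy : w ≠ y := by
    rintro rfl
    omega
  have nxz : x ≠ z := by
    rintro rfl
    omega
  have hP := hfix w y nwy hwy
  have hQ := hfix x z nxz hxz
  have oP := hout w y nwy hwy
  have oQ := hout x z nxz hxz
  have parP := layer_parity hra hfa hrb hfb (outEmb w) hP.1 hP.2
  have parQ := layer_parity hra hfa hrb hfb (outEmb x) hQ.1 hQ.2
  have hdisj : ∀ t, (stackSetoid a b).r (outEmb w) t → ¬ (stackSetoid a b).r (outEmb x) t :=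
    fun t h1 h2 => hnwx ((stackSetoid a b).trans h1 ((stackSetoid a b).symm h2))
  have clA : ∀ s, ∀ p ∈ layerPart a b s upEmb, fa p ∈ layerPart a b s upEmb :=
    fun s p hp => mem_layerPart.2 ((stackSetoid a b).trans (mem_layerPart.1 hp)
      (stack_up ((hra _ _).2 (Or.inr rfl))))
  have clB : ∀ s, ∀ p ∈ layerPart a b s downEmb, fb p ∈ layerPart a b s downEmb :=
    fun s p hp => mem_layerPart.2 ((stackSetoid a b).trans (mem_layerPart.1 hp)
      (stack_down ((hrb _ _).2 (Or.inr rfl))))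
  have lA := lkNum_eq_zero a hpa fa hra hfa _ _ (clA (outEmb w))
    (fun p hp => hP.1 p (mem_layerPart.1 hp)) (clA (outEmb x))
    (fun p hp => hQ.1 p (mem_layerPart.1 hp))
    (fun p hp hq => hdisj _ (mem_layerPart.1 hp) (mem_layerPart.1 hq))
  have lB := lkNum_eq_zero b hpb fb hrb hfb _ _ (clB (outEmb w))
    (fun p hp => hP.2 p (mem_layerPart.1 hp)) (clB (outEmb x))
    (fun p hp => hQ.2 p (mem_layerPart.1 hp))
    (fun p hp hq => hdisj _ (mem_layerPart.1 hp) (mem_layerPart.1 hq))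
  have lO : lkNum (layerPart a b (outEmb w) outEmb) (layerPart a b (outEmb x) outEmb) = 1 := by
    rw [oP, oQ]
    unfold lkNum
    rw [Finset.sum_pair nwy, Finset.sum_pair nxz, Finset.sum_pair nxz]
    rw [if_pos hwx, if_pos (by omega), if_neg (by omega), if_pos hyz]
    decide
  have hswap := incNum_add_swap (layerPart a b (outEmb w) fun i => .inr (.inl i))
    (layerPart a b (outEmb x) fun i => .inr (.inl i))
    (fun p hp hq => hdisj (.inr (.inl p)) (by simpa only [mem_layerPart] using hp)
      (by simpa only [mem_layerPart] using hq))
  rw [layerPart_disjSum, layerPart_disjSum a b (outEmb x), lkNum_disjSum] at lA lB lO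
  simp only [upEmb, downEmb] at lA lB
  have eL : (fun i : Fin n => outEmb (Sum.inl i)) = fun i => .inl i := rfl
  have eR : (fun i : Fin n => outEmb (Sum.inr i)) = fun i => .inr (.inr i) := rfl
  rw [eL, eR] at lO
  generalize outEmb w = w' at *
  generalize outEmb x = x' at *
  generalize incNum (layerPart a b w' fun i => .inl i) (layerPart a b x' fun i => .inl i) = i1 at *
  generalize incNum (layerPart a b w' fun i => .inr (.inl i))
    (layerPart a b x' fun i => .inr (.inl i)) = i2 at *
  generalize incNum (layerPart a b x' fun i => .inr (.inl i))
    (layerPart a b w' fun i => .inr (.inl i)) = i3 at *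
  generalize incNum (layerPart a b x' fun i => .inr (.inr i))
    (layerPart a b w' fun i => .inr (.inr i)) = i4 at *
  generalize ((layerPart a b w' fun i => Sum.inl i).card : ZMod 2) = p1 at *
  generalize ((layerPart a b w' fun i => Sum.inr (Sum.inl i)).card : ZMod 2) = p2 at *
  generalize ((layerPart a b w' fun i => Sum.inr (Sum.inr i)).card : ZMod 2) = p3 at *
  generalize ((layerPart a b x' fun i => Sum.inl i).card : ZMod 2) = q1 at *
  generalize ((layerPart a b x' fun i => Sum.inr (Sum.inl i)).card : ZMod 2) = q2 at *
  generalize ((layerPart a b x' fun i => Sum.inr (Sum.inr i)).card : ZMod 2) = q3 at *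
  clear * - lA lB lO hswap parP parQ
  obtain ⟨u1, u2⟩ := parP
  obtain ⟨v1, v2⟩ := parQ
  have two : (2 : ZMod 2) = 0 := by decide
  have hp12 : p1 = p2 := by linear_combination u1 - p2 * two
  have hp23 : p2 = p3 := by linear_combination u2 - p3 * two
  have hq12 : q1 = q2 := by linear_combination v1 - q2 * two
  have hq23 : q2 = q3 := by linear_combination v2 - q3 * two
  subst hp12 hp23 hq12 hq23
  have : (1 : ZMod 2) = 0 := by
    linear_combination lA + lB - lO - hswap - p1 * q1 * two
  exact absurd this (by decide)

theorem motzkin_mul {n : ℕ} {a b : PElt n} (ha : a ∈ Motzkin n) (hb : b ∈ Motzkin n) :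
    pmul a b ∈ Motzkin n :=
  ⟨pmul_planar ha.1 hb.1 ha.2 hb.2, pmul_blockCard_le ha.2 hb.2⟩

theorem jones_sub {n : ℕ} {a : PElt n} (ha : a ∈ Jones n) : a ∈ Motzkin n :=
  ⟨ha.1, fun x => (ha.2 x).le⟩

theorem jones_mul {n : ℕ} {a b : PElt n} (ha : a ∈ Jones n) (hb : b ∈ Jones n) :
    pmul a b ∈ Jones n := by
  have h := motzkin_mul (jones_sub ha) (jones_sub hb)
  exact ⟨h.1, fun x => (blockCard_eq_two_iff _ x).2 ⟨h.2 x, pmul_partner ha.2 hb.2 x⟩⟩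

/-! ### Cap elements -/

/-- Labels of the blocks of `capElt`. -/
def capLabel {n : ℕ} (B : Finset (Fin n)) : PV n → Fin n ⊕ Bool
  | .inl i => if i ∈ B then .inr true else .inl i
  | .inr i => if i ∈ B then .inr false else .inl i

/-- The partition which is the identity off `B`, and has the upper and lower copies of `B`
as blocks. -/
def capElt {n : ℕ} (B : Finset (Fin n)) : PElt n := Setoid.ker (capLabel B)

theorem capElt_r {n : ℕ} {B : Finset (Fin n)} {x y : PV n} :
    (capElt B).r x y ↔ capLabel B x = capLabel B y := Iff.rfl

theorem capElt_ll {n : ℕ} {B : Finset (Fin n)} {i j : Fin n} :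
    (capElt B).r (.inl i) (.inl j) ↔ i = j ∨ (i ∈ B ∧ j ∈ B) := by
  rw [capElt_r]
  simp only [capLabel]
  split_ifs <;> grind

theorem capElt_rr {n : ℕ} {B : Finset (Fin n)} {i j : Fin n} :
    (capElt B).r (.inr i) (.inr j) ↔ i = j ∨ (i ∈ B ∧ j ∈ B) := by
  rw [capElt_r]
  simp only [capLabel]
  split_ifs <;> grind

theorem capElt_lr {n : ℕ} {B : Finset (Fin n)} {i j : Fin n} :
    (capElt B).r (.inl i) (.inr j) ↔ i = j ∧ i ∉ B := by
  rw [capElt_r]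
  simp only [capLabel]
  split_ifs <;> grind

theorem capElt_rl {n : ℕ} {B : Finset (Fin n)} {i j : Fin n} :
    (capElt B).r (.inr i) (.inl j) ↔ i = j ∧ i ∉ B := by
  rw [capElt_r]
  simp only [capLabel]
  split_ifs <;> grind

theorem capElt_empty (n : ℕ) : capElt (∅ : Finset (Fin n)) = pid n := by
  ext x y
  change (capElt ∅).r x y ↔ Sum.elim id id x = Sum.elim id id y
  rcases x with i | i <;> rcases y with j | j <;>
    simp [capElt_ll, capElt_lr, capElt_rl, capElt_rr]

theorem capElt_mem_motzkin {n : ℕ} (B : Finset (Fin n))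
    (h1 : ∀ i ∈ B, ∀ k ∈ B, ∀ j, i < j → j < k → j ∈ B)
    (h2 : ∀ i ∈ B, ∀ j ∈ B, ∀ k ∈ B, j = i ∨ k = i ∨ j = k) : capElt B ∈ Motzkin n := by
  constructor
  · rintro ⟨w, x, y, z, hwx, hxy, hyz, hwy, hxz, hn⟩
    rcases w with w | w <;> rcases x with x | x <;> rcases y with y | y <;> rcases z with z | z <;>
      simp only [ordIdx, capElt_ll, capElt_lr, capElt_rl, capElt_rr] at hwx hxy hyz hwy hxz hn <;>
      first
      | omega
      | (have A := fun hw hy => h1 w hw y hy x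
         have C := fun hz hx => h1 z hz x hx w
         simp only [Fin.lt_def] at A C
         grind)
  · intro x
    rw [blockCard_le_two_iff]
    intro y z hy hz
    rcases x with x | x <;> rcases y with y | y <;> rcases z with z | z <;>
      simp only [capElt_ll, capElt_lr, capElt_rl, capElt_rr] at hy hz <;> grind

theorem capElt_mem_jones {n : ℕ} (B : Finset (Fin n))
    (h1 : ∀ i ∈ B, ∀ k ∈ B, ∀ j, i < j → j < k → j ∈ B)
    (h2 : ∀ i ∈ B, ∀ j ∈ B, ∀ k ∈ B, j = i ∨ k = i ∨ j = k)
    (h3 : ∀ i ∈ B, ∃ j ∈ B, j ≠ i) : capElt B ∈ Jones n := by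
  have h := capElt_mem_motzkin B h1 h2
  refine ⟨h.1, fun x => (blockCard_eq_two_iff _ x).2 ⟨h.2 x, ?_⟩⟩
  rcases x with i | i
  · by_cases hi : i ∈ B
    · obtain ⟨j, hj, hne⟩ := h3 i hi
      exact ⟨.inl j, by simpa using hne, capElt_ll.2 (Or.inr ⟨hi, hj⟩)⟩
    · exact ⟨.inr i, by simp, capElt_lr.2 ⟨rfl, hi⟩⟩
  · by_cases hi : i ∈ B
    · obtain ⟨j, hj, hne⟩ := h3 i hi
      exact ⟨.inr j, by simpa using hne, capElt_rr.2 (Or.inr ⟨hi, hj⟩)⟩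
    · exact ⟨.inl i, by simp, capElt_rl.2 ⟨rfl, hi⟩⟩

theorem pid_mem_jones (n : ℕ) : pid n ∈ Jones n := by
  rw [← capElt_empty]
  exact capElt_mem_jones ∅ (by simp) (by simp) (by simp)

/-- Collapsing the middle row onto the lower row. -/
def collapse {n : ℕ} : TV n → PV n
  | .inl i => .inl i
  | .inr (.inl i) => .inr i
  | .inr (.inr i) => .inr i

theorem pmul_capElt {n : ℕ} (a : PElt n) (B : Finset (Fin n))
    (hB : ∀ k ∈ B, ∀ q, a.r (.inr k) q ↔ ∃ k' ∈ B, q = .inr k') : pmul a (capElt B) = a := by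
  ext x y
  rw [pmul_r]
  constructor
  · intro h
    have h' := stack_le (a := a) (b := capElt B) (Setoid.comap collapse a) ?_ ?_ h
    · change a.r (collapse (outEmb x)) (collapse (outEmb y)) at h'
      rcases x with i | i <;> rcases y with j | j <;> exact h'
    · intro p q hpq
      change a.r (collapse (upEmb p)) (collapse (upEmb q))
      rcases p with i | i <;> rcases q with j | j <;> exact hpq
    · intro p q hpq
      change a.r (collapse (downEmb p)) (collapse (downEmb q))
      have key : ∀ i j : Fin n, i = j ∨ (i ∈ B ∧ j ∈ B) → a.r (.inr i) (.inr j) := by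
        rintro i j (rfl | ⟨hi, hj⟩)
        · exact a.refl _
        · exact (hB i hi _).2 ⟨j, hj, rfl⟩
      rcases p with i | i <;> rcases q with j | j <;>
        simp only [capElt_ll, capElt_lr, capElt_rl, capElt_rr] at hpq
      · exact key i j hpq
      · exact key i j (Or.inl hpq.1)
      · exact key i j (Or.inl hpq.1)
      · exact key i j hpq
  · intro h
    have low : ∀ k ∈ B, ∀ q, a.r (.inr k) q →
        (stackSetoid a (capElt B)).r (outEmb (.inr k)) (outEmb q) := by
      intro k hk q hq
      obtain ⟨k', hk', rfl⟩ := (hB k hk q).1 hq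
      exact stack_down (a := a) (p := .inr k) (q := .inr k') (capElt_rr.2 (Or.inr ⟨hk, hk'⟩))
    by_cases hx : ∃ k ∈ B, x = .inr k
    · obtain ⟨k, hk, rfl⟩ := hx
      exact low k hk y h
    by_cases hy : ∃ k ∈ B, y = .inr k
    · obtain ⟨k, hk, rfl⟩ := hy
      exact (stackSetoid a (capElt B)).symm (low k hk x (a.symm h))
    have conn : ∀ z : PV n, (¬ ∃ k ∈ B, z = .inr k) →
        (stackSetoid a (capElt B)).r (outEmb z) (upEmb z) := by
      intro z hz
      rcases z with i | i
      · exact (stackSetoid a (capElt B)).refl _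
      · refine stack_down (a := a) (p := .inr i) (q := .inl i) (capElt_rl.2 ⟨rfl, fun hi => ?_⟩)
        exact hz ⟨i, hi, rfl⟩
    exact (stackSetoid a (capElt B)).trans (conn x hx)
      ((stackSetoid a (capElt B)).trans (stack_up h) ((stackSetoid a (capElt B)).symm (conn y hy)))

theorem pmul_pid {n : ℕ} (a : PElt n) : pmul a (pid n) = a := by
  rw [← capElt_empty]
  exact pmul_capElt a ∅ (by simp)

theorem floating_sub {n : ℕ} (a : PElt n) (B : Finset (Fin n)) (x : TV n)
    (hx : ∀ y, (stackSetoid a (capElt B)).r y x → isMiddle y) :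
    ∃ k ∈ B, x = .inr (.inl k) := by
  have h0 := hx x ((stackSetoid a (capElt B)).refl _)
  rcases x with i | i | i
  · exact h0.elim
  · refine ⟨i, ?_, rfl⟩
    by_contra hi
    exact hx (.inr (.inr i)) (stack_down (a := a) (p := .inr i) (q := .inl i)
      (capElt_rl.2 ⟨rfl, hi⟩))
  · exact h0.elim

theorem floatCount_pid (n : ℕ) (a : PElt n) : floatCount a (pid n) = 0 := by
  rw [← capElt_empty]
  unfold floatCount
  rw [Nat.card_eq_zero]
  left
  constructor
  rintro ⟨c, hc⟩
  induction c using Quotient.inductionOn with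
  | _ x =>
    obtain ⟨k, hk, _⟩ := floating_sub a ∅ x (fun y hy => hc y (Quotient.sound hy))
    simp at hk

theorem floatCount_capElt {n : ℕ} (a : PElt n) (B : Finset (Fin n)) (hne : B.Nonempty)
    (hB : ∀ k ∈ B, ∀ q, a.r (.inr k) q ↔ ∃ k' ∈ B, q = .inr k') :
    floatCount a (capElt B) = 1 := by
  obtain ⟨k, hk⟩ := hne
  unfold floatCount
  rw [Nat.card_eq_one_iff_exists]
  -- the indicator of the floating component
  let χ : TV n → Prop := fun x => ∃ i ∈ B, x = .inr (.inl i)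
  have hχ : ∀ x y, (stackSetoid a (capElt B)).r x y → (χ x ↔ χ y) := by
    intro x y h
    have hB' : ∀ p q, a.r p q → χ (upEmb p) → χ (upEmb q) := by
      rintro p q hpq ⟨i, hi, e⟩
      rcases p with p | p
      · simp [upEmb] at e
      · simp only [upEmb, Sum.inr.injEq, Sum.inl.injEq] at e
        subst e
        obtain ⟨k', hk', rfl⟩ := (hB p hi q).1 hpq
        exact ⟨k', hk', rfl⟩
    have hC : ∀ p q, (capElt B).r p q → χ (downEmb p) → χ (downEmb q) := by
      rintro p q hpq ⟨i, hi, e⟩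
      rcases p with p | p
      · simp only [downEmb, Sum.inr.injEq, Sum.inl.injEq] at e
        subst e
        rcases q with q | q
        · rw [capElt_ll] at hpq
          refine ⟨q, ?_, rfl⟩
          rcases hpq with rfl | h
          · exact hi
          · exact h.2
        · rw [capElt_lr] at hpq
          exact absurd hi hpq.2
      · simp [downEmb] at e
    have h' := stack_le (a := a) (b := capElt B) (Setoid.ker χ)
      (fun p q h => propext ⟨hB' p q h, hB' q p (a.symm h)⟩)
      (fun p q h => propext ⟨hC p q h, hC q p ((capElt B).symm h)⟩) h
    have h'' : χ x = χ y := h'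
    rw [h'']
  refine ⟨⟨Quotient.mk _ (.inr (.inl k)), ?_⟩, ?_⟩
  · intro x hx
    have := (hχ x _ (Quotient.exact hx)).2 ⟨k, hk, rfl⟩
    obtain ⟨i, _, rfl⟩ := this
    trivial
  · rintro ⟨c, hc⟩
    induction c using Quotient.inductionOn with
    | _ x =>
      obtain ⟨k', hk', rfl⟩ := floating_sub a B x (fun y hy => hc y (Quotient.sound hy))
      apply Subtype.ext
      exact Quotient.sound (stack_down (a := a) (p := .inl k') (q := .inl k)
        (capElt_ll.2 (Or.inr ⟨hk', hk⟩)))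

/-! ### Elements all of whose lower vertices are active -/

theorem eq_pid_of_active {n : ℕ} {a : PElt n} (ha : a ∈ Motzkin n)
    (h : ∀ i : Fin n, ∃ j : Fin n, a.r (.inr i) (.inl j)) : a = pid n := by
  have two : ∀ x y z, a.r x y → a.r x z → y = x ∨ z = x ∨ y = z :=
    fun x => (blockCard_le_two_iff a x).1 (ha.2 x)
  choose σ hσ using h
  have uniq : ∀ i j, a.r (.inr i) (.inl j) → j = σ i := by
    intro i j hij
    rcases two _ _ _ hij (hσ i) with e | e | e
    · simp at e
    · simp at e
    · simpa using e
  have inj : Function.Injective σ := by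
    intro i j hij
    have h1 := a.symm (hσ i)
    have h2 := a.symm (hσ j)
    rw [← hij] at h2
    rcases two _ _ _ h1 h2 with e | e | e
    · simp at e
    · simp at e
    · simpa using e
  have mono : StrictMono σ := by
    intro i j hij
    by_contra hc
    have hne : σ i ≠ σ j := fun e => hij.ne (inj e)
    have hlt : σ j < σ i := lt_of_le_of_ne (not_lt.1 hc) hne.symm
    refine ha.1 ⟨.inl (σ j), .inl (σ i), .inr j, .inr i, ?_, ?_, ?_, a.symm (hσ j),
      a.symm (hσ i), fun hr => ?_⟩
    · exact hlt
    · simp only [ordIdx]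
      omega
    · simp only [ordIdx]
      omega
    · exact hne (uniq j _ (a.trans (hσ j) hr))
  have hid : σ = id := by
    refine mono.range_inj strictMono_id |>.1 ?_
    rw [Set.range_id, (Finite.injective_iff_surjective.1 inj).range_eq]
  subst hid
  have lr : ∀ x : PV n, a.r x (.inl (Sum.elim id id x)) := by
    rintro (i | i)
    · exact a.refl _
    · exact hσ i
  ext x y
  change a.r x y ↔ Sum.elim id id x = Sum.elim id id y
  constructor
  · intro hxy
    have h1 : a.r (.inl (Sum.elim id id x)) (.inl (Sum.elim id id y)) :=
      a.trans (a.symm (lr x)) (a.trans hxy (lr y))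
    have h2 := uniq (Sum.elim id id x) _ (a.trans (hσ _) h1)
    exact h2.symm
  · intro e
    have := lr y
    rw [← e] at this
    exact a.trans (lr x) (a.symm this)

theorem mul_eq_pid {n : ℕ} {a b : PElt n} (hb : b ∈ Motzkin n) (h : pmul a b = pid n) :
    a = pid n ∧ b = pid n := by
  have hbid : b = pid n := by
    refine eq_pid_of_active hb fun i => ?_
    by_contra hc
    push Not at hc
    let χ : TV n → Prop := fun x => match x with
      | .inl _ => False
      | .inr (.inl _) => False
      | .inr (.inr k) => b.r (.inr i) (.inr k)
    have h1 : (pmul a b).r (.inr i) (.inl i) := by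
      rw [h]
      rfl
    have hC : ∀ p q, b.r p q → χ (downEmb p) → χ (downEmb q) := by
      intro p q hpq hp
      rcases p with p | p
      · exact hp.elim
      · have hp' : b.r (.inr i) (.inr p) := hp
        rcases q with q | q
        · exact absurd (b.trans hp' hpq) (hc q)
        · exact b.trans hp' hpq
    have h2 := stack_le (a := a) (b := b) (Setoid.ker χ)
      (fun p q _ => by
        change χ (upEmb p) = χ (upEmb q)
        rcases p with p | p <;> rcases q with q | q <;> rfl)
      (fun p q hpq => propext ⟨hC p q hpq, hC q p (b.symm hpq)⟩) h1
    have h3 : b.r (.inr i) (.inr i) = False := h2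
    rw [← h3]
  rw [hbid, pmul_pid] at h
  exact ⟨h, hbid⟩

/-- Innermost lower arcs join neighbouring vertices. -/
theorem exists_adjacent {n : ℕ} {a : PElt n} (ha : a ∈ Motzkin n)
    (hns : ∀ k : Fin n, ∃ q, q ≠ .inr k ∧ a.r (.inr k) q) (d : ℕ) :
    ∀ i j : Fin n, i < j → j.val = i.val + d → a.r (.inr i) (.inr j) →
      ∃ k k' : Fin n, k'.val = k.val + 1 ∧ a.r (.inr k) (.inr k') := by
  have two : ∀ x y z, a.r x y → a.r x z → y = x ∨ z = x ∨ y = z :=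
    fun x => (blockCard_le_two_iff a x).1 (ha.2 x)
  induction d using Nat.strong_induction_on with
  | _ d ih =>
    intro i j hij hd hr
    by_cases h1 : d = 1
    · exact ⟨i, j, by omega, hr⟩
    rw [Fin.lt_def] at hij
    have hjn := j.isLt
    obtain ⟨m, hm⟩ : ∃ m : Fin n, m.val = i.val + 1 := ⟨⟨i.val + 1, by omega⟩, rfl⟩
    have hmi : m ≠ i := fun e => by
      rw [e] at hm
      omega
    have hmj : m ≠ j := fun e => by
      rw [e] at hm
      omega
    have hni : ¬ a.r (.inr m) (.inr i) := fun h => by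
      rcases two _ _ _ (a.symm h) hr with e | e | e
      · exact hmi (by simpa using e)
      · exact hij.ne' (by simpa [Fin.ext_iff] using e)
      · exact hmj (by simpa using e)
    have hnj : ¬ a.r (.inr m) (.inr j) := fun h => hni (a.trans h (a.symm hr))
    obtain ⟨q, hq, hmq⟩ := hns m
    rcases q with l | l
    · exfalso
      refine ha.1 ⟨.inl l, .inr j, .inr m, .inr i, ?_, ?_, ?_, a.symm hmq, a.symm hr,
        fun h => hnj (a.trans hmq h)⟩ <;> simp only [ordIdx] <;> omega
    · have hlm : l ≠ m := by simpa using hq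
      have hlm' : l.val ≠ m.val := fun e => hlm (Fin.ext e)
      have hli : l.val ≠ i.val := fun e => hni (by rw [← Fin.ext e]; exact hmq)
      have hlj : l.val ≠ j.val := fun e => hnj (by rw [← Fin.ext e]; exact hmq)
      by_cases c1 : l.val < i.val
      · exfalso
        refine ha.1 ⟨.inr j, .inr m, .inr i, .inr l, ?_, ?_, ?_, a.symm hr, hmq,
          fun h => hnj (a.symm h)⟩ <;> simp only [ordIdx] <;> omega
      by_cases c2 : j.val < l.val
      · exfalso
        refine ha.1 ⟨.inr l, .inr j, .inr m, .inr i, ?_, ?_, ?_, a.symm hmq, a.symm hr,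
          fun h => hnj (a.trans hmq h)⟩ <;> simp only [ordIdx] <;> omega
      exact ih (l.val - m.val) (by omega) m l (by rw [Fin.lt_def]; omega) (by omega) hmq

theorem exists_cap {n : ℕ} {a : PElt n} (ha : a ∈ Motzkin n) (hne : a ≠ pid n) :
    ∃ c : PElt n, c ∈ Motzkin n ∧ (a ∈ Jones n → c ∈ Jones n) ∧ pmul a c = a ∧
      floatCount a c = 1 := by
  by_cases hs : ∃ k : Fin n, ∀ q, a.r (.inr k) q → q = .inr k
  · obtain ⟨k, hk⟩ := hs
    have hB : ∀ k₁ ∈ ({k} : Finset (Fin n)), ∀ q, a.r (.inr k₁) q ↔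
        ∃ k' ∈ ({k} : Finset (Fin n)), q = .inr k' := by
      intro k₁ hk₁ q
      rw [Finset.mem_singleton] at hk₁
      subst hk₁
      simp only [Finset.mem_singleton, exists_eq_left]
      refine ⟨hk q, ?_⟩
      rintro rfl
      exact a.refl _
    refine ⟨capElt {k}, ?_, ?_, pmul_capElt a _ hB, floatCount_capElt a _ (by simp) hB⟩
    · refine capElt_mem_motzkin _ ?_ (by simp)
      intro i hi k' hk' j h1 h2
      simp only [Finset.mem_singleton] at hi hk'
      subst hi hk'
      exact absurd (h1.trans h2) (lt_irrefl _)
    · intro hJ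
      obtain ⟨y, hy, hr⟩ := ((blockCard_eq_two_iff a (.inr k)).1 (hJ.2 _)).2
      exact absurd (hk y hr) hy
  · push Not at hs
    have hns : ∀ k : Fin n, ∃ q, q ≠ .inr k ∧ a.r (.inr k) q := fun k => by
      obtain ⟨q, h1, h2⟩ := hs k
      exact ⟨q, h2, h1⟩
    obtain ⟨k, k', hkk, hr⟩ : ∃ k k' : Fin n, k'.val = k.val + 1 ∧ a.r (.inr k) (.inr k') := by
      by_contra hc
      refine hne (eq_pid_of_active ha fun i => ?_)
      obtain ⟨q, hq, hiq⟩ := hns i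
      rcases q with j | j
      · exact ⟨j, hiq⟩
      · exfalso
        have hji : j ≠ i := by simpa using hq
        rcases lt_or_gt_of_ne hji with h | h
        · exact hc (exists_adjacent ha hns (i.val - j.val) j i h
            (by rw [Fin.lt_def] at h; omega) (a.symm hiq))
        · exact hc (exists_adjacent ha hns (j.val - i.val) i j h
            (by rw [Fin.lt_def] at h; omega) hiq)
    have hne' : k' ≠ k := fun e => by
      rw [e] at hkk
      omega
    have hB : ∀ k₁ ∈ ({k, k'} : Finset (Fin n)), ∀ q, a.r (.inr k₁) q ↔
        ∃ k₂ ∈ ({k, k'} : Finset (Fin n)), q = .inr k₂ := by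
      have base : ∀ q, a.r (.inr k) q ↔ ∃ k₂ ∈ ({k, k'} : Finset (Fin n)), q = .inr k₂ := by
        intro q
        simp only [Finset.mem_insert, Finset.mem_singleton, exists_eq_or_imp, exists_eq_left]
        constructor
        · intro h
          rcases (blockCard_le_two_iff a _).1 (ha.2 (.inr k)) q (.inr k') h hr with e | e | e
          · exact Or.inl e
          · exact absurd (by simpa using e) hne'
          · exact Or.inr e
        · rintro (rfl | rfl)
          · exact a.refl _
          · exact hr
      intro k₁ hk₁ q
      rw [← base q]
      simp only [Finset.mem_insert, Finset.mem_singleton] at hk₁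
      rcases hk₁ with rfl | rfl
      · rfl
      · exact ⟨fun h => a.trans hr h, fun h => a.trans (a.symm hr) h⟩
    have c1 : ∀ i ∈ ({k, k'} : Finset (Fin n)), ∀ l ∈ ({k, k'} : Finset (Fin n)), ∀ j,
        i < j → j < l → j ∈ ({k, k'} : Finset (Fin n)) := by
      intro i hi l hl j h1 h2
      exfalso
      simp only [Finset.mem_insert, Finset.mem_singleton] at hi hl
      rw [Fin.lt_def] at h1 h2
      rcases hi with rfl | rfl <;> rcases hl with rfl | rfl <;> omega
    have c2 : ∀ i ∈ ({k, k'} : Finset (Fin n)), ∀ j ∈ ({k, k'} : Finset (Fin n)),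
        ∀ l ∈ ({k, k'} : Finset (Fin n)), j = i ∨ l = i ∨ j = l := by
      intro i hi j hj l hl
      simp only [Finset.mem_insert, Finset.mem_singleton] at hi hj hl
      grind
    have c3 : ∀ i ∈ ({k, k'} : Finset (Fin n)), ∃ j ∈ ({k, k'} : Finset (Fin n)), j ≠ i := by
      intro i hi
      simp only [Finset.mem_insert, Finset.mem_singleton] at hi
      rcases hi with rfl | rfl
      · exact ⟨k', by simp, hne'⟩
      · exact ⟨k, by simp, hne'.symm⟩
    exact ⟨capElt {k, k'}, capElt_mem_motzkin _ c1 c2, fun _ => capElt_mem_jones _ c1 c2 c3,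
      pmul_capElt a _ hB, floatCount_capElt a _ (by simp) hB⟩

/-! ### The twisted variant -/

theorem twistMul_single {K : Type} [Field K] {n : ℕ} (ξ : K) (a b : PElt n) (s t : K) :
    twistMul ξ (Finsupp.single a s) (Finsupp.single b t) =
      Finsupp.single (pmul a b) (s * t * ξ ^ floatCount a b) := by
  unfold twistMul
  rw [Finsupp.sum_single_index, Finsupp.sum_single_index]
  · simp
  · rw [Finsupp.sum_single_index] <;> simp

theorem twisted_variant_aux {K : Type} [Field K] (n : ℕ) (S : Set (PElt n)) (ξ : K)
    (hone : pid n ∈ S) (hsub : S ⊆ Motzkin n) (hmul : ∀ a ∈ S, ∀ b ∈ S, pmul a b ∈ S)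
    (hcap : ∀ a ∈ S, a ≠ pid n → ∃ c ∈ S, pmul a c = a ∧ floatCount a c = 1) :
    TwistedVariant ξ S =
      insert (Finsupp.single (pid n) (1 : K))
        {f | ∃ (i : ℕ), ∃ a ∈ S, a ≠ pid n ∧ f = Finsupp.single a (ξ ^ i)} := by
  apply Set.Subset.antisymm
  · refine Set.sInter_subset_of_mem ⟨?_, ?_⟩
    · intro a ha
      by_cases h : a = pid n
      · left
        rw [h]
      · right
        exact ⟨0, a, ha, h, by rw [pow_zero]⟩
    · intro f hf g hg
      have rep : ∀ f ∈ insert (Finsupp.single (pid n) (1 : K))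
          {f | ∃ (i : ℕ), ∃ a ∈ S, a ≠ pid n ∧ f = Finsupp.single a (ξ ^ i)},
          ∃ (i : ℕ), ∃ a ∈ S, f = Finsupp.single a (ξ ^ i) ∧ (a = pid n → i = 0) := by
        rintro f (rfl | ⟨i, a, ha, hne, rfl⟩)
        · exact ⟨0, pid n, hone, by rw [pow_zero], fun _ => rfl⟩
        · exact ⟨i, a, ha, rfl, fun e => absurd e hne⟩
      obtain ⟨i, a, ha, rfl, hia⟩ := rep f hf
      obtain ⟨j, b, hb, rfl, hjb⟩ := rep g hg
      rw [twistMul_single, ← pow_add, ← pow_add]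
      by_cases h : pmul a b = pid n
      · obtain ⟨ea, eb⟩ := mul_eq_pid (hsub hb) h
        left
        rw [h, hia ea, hjb eb, eb, floatCount_pid]
        simp
      · right
        exact ⟨_, _, hmul a ha b hb, h, rfl⟩
  · rintro f hf T ⟨hT1, hT2⟩
    rcases hf with rfl | ⟨i, a, ha, hne, rfl⟩
    · exact hT1 _ hone
    · obtain ⟨c, hc, h1, h2⟩ := hcap a ha hne
      induction i with
      | zero =>
        rw [pow_zero]
        exact hT1 a ha
      | succ i ih =>
        have := hT2 _ ih _ (hT1 c hc)
        rw [twistMul_single, h1, h2, mul_one, pow_one, ← pow_succ] at this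
        exact this

/-- Corollary 4.3. Let `S` be `M_n` or `J_n`, `k` a field and
`ξ ∈ k∖{0}`. Then `S^ξ = {1} ∪ {ξ^i·α : i ∈ ℕ, α ∈ S∖{1}}`. -/
theorem twisted_variant_eq {K : Type} [Field K] (n : ℕ) (S : Set (PElt n))
    (hS : S = Motzkin n ∨ S = Jones n) (ξ : K) (hξ : ξ ≠ 0) :
    TwistedVariant ξ S =
      insert (Finsupp.single (pid n) (1 : K))
        {f | ∃ (i : ℕ), ∃ a ∈ S, a ≠ pid n ∧ f = Finsupp.single a (ξ ^ i)} := by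
  rcases hS with rfl | rfl
  · refine twisted_variant_aux n _ ξ (jones_sub (pid_mem_jones n)) (fun _ h => h)
      (fun a ha b hb => motzkin_mul ha hb) (fun a ha hne => ?_)
    obtain ⟨c, h1, _, h2, h3⟩ := exists_cap ha hne
    exact ⟨c, h1, h2, h3⟩
  · refine twisted_variant_aux n _ ξ (pid_mem_jones n) (fun _ h => jones_sub h)
      (fun a ha b hb => jones_mul ha hb) (fun a ha hne => ?_)
    obtain ⟨c, _, h1, h2, h3⟩ := exists_cap (jones_sub ha) hne
    exact ⟨c, h1 ha, h2, h3⟩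
end

section
/- Let S be the Motzkin monoid M_n or the Jones monoid J_n, let k be a field and ξ ∈ k ∖ {0}. Then: (i) the map α ↦ ξ^{−m(α,α)}·α is a bijection from E(S) onto E(⟨S^ξ, ξ·1, ξ^{−1}·1⟩); (ii) if ξ is a root of unity then |E(⟨S^ξ, ξ·1⟩)| = |E(S)|; and (iii) if ξ is not a root of unity then E(⟨S^ξ, ξ·1⟩) = E(S^ξ) = {α ∈ E(S) : m(α,α) = 0}. -/
open Relation

/-! ### Twisted semigroup algebras -/

variable {K : Type} [Field K]

section TwistedHelpers
open Classical

theorem tw_ord_inj {n : ℕ} {u v : PV n} (h : ordIdx n u = ordIdx n v) : u = v := by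
  rcases u with i | i <;> rcases v with j | j <;> simp only [ordIdx] at h <;>
    have hi := i.2 <;> have hj := j.2
  · congr 1; exact Fin.ext h
  · omega
  · omega
  · congr 1; apply Fin.ext; omega

/-- blocks have size at most two -/
def TwU {n : ℕ} (a : PElt n) : Prop :=
  ∀ x y z : PV n, a.r x y → a.r x z → y ≠ x → z ≠ x → y = z

theorem tw_block_le {n : ℕ} (a : PElt n) : (∀ x, blockCard a x ≤ 2) ↔ TwU a := by
  have key : ∀ x, blockCard a x = Set.ncard {y | a.r x y} := fun x => rfl
  constructor
  · intro h x y z hy hz hyx hzx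
    by_contra hne
    have h1 := h x
    rw [key] at h1
    have : 2 < Set.ncard {y | a.r x y} := by
      rw [Set.two_lt_ncard_iff (Set.toFinite _)]
      exact ⟨x, y, z, a.refl' x, hy, hz, hyx.symm, hzx.symm, hne⟩
    omega
  · intro h x
    by_contra hlt
    rw [key, not_le, Set.two_lt_ncard_iff (Set.toFinite _)] at hlt
    obtain ⟨p, q, r, hp, hq, hr, hpq, hpr, hqr⟩ := hlt
    have hp : a.r x p := hp
    have hq : a.r x q := hq
    have hr : a.r x r := hr
    by_cases h1 : p = x
    · subst h1
      exact hqr (h _ _ _ hq hr hpq.symm hpr.symm)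
    · by_cases h2 : q = x
      · subst h2
        exact hpr (h _ _ _ hp hr hpq hqr.symm)
      · exact hpq (h _ _ _ hp hq h1 h2)

theorem tw_block_ge {n : ℕ} (a : PElt n) (x : PV n) :
    2 ≤ blockCard a x ↔ ∃ y, y ≠ x ∧ a.r x y := by
  have key : ∀ x, blockCard a x = Set.ncard {y | a.r x y} := fun x => rfl
  rw [key, ← Nat.lt_iff_add_one_le (m := 1), Set.one_lt_ncard_iff (Set.toFinite _)]
  constructor
  · rintro ⟨p, q, hp, hq, hpq⟩
    by_cases h : p = x
    · exact ⟨q, fun h' => hpq (h.trans h'.symm), hq⟩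
    · exact ⟨p, h, hp⟩
  · rintro ⟨y, hy, h⟩
    exact ⟨x, y, a.refl' x, h, hy.symm⟩

theorem tw_even {n : ℕ} (a : PElt n) (ha : TwU a) (Q : PV n → Prop) [DecidablePred Q]
    (hQ : ∀ v, Q v → ∃ p, Q p ∧ p ≠ v ∧ a.r v p) :
    Even (Finset.univ.filter Q).card := by
  choose! g hg1 hg2 hg3 using hQ
  have : ∑ v ∈ Finset.univ.filter Q, (1 : ZMod 2) = 0 := by
    refine Finset.sum_involution (fun v _ => g v) ?_ ?_ ?_ ?_
    · intro v _; decide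
    · intro v hv _; simp at hv; exact hg2 v hv
    · intro v hv; simp at hv ⊢; exact hg1 v hv
    · intro v hv; simp at hv
      exact ha (g v) _ _ (hg3 _ (hg1 v hv)) (a.symm' (hg3 v hv)) (hg2 _ (hg1 v hv)) (hg2 v hv).symm
  rw [Finset.sum_const, nsmul_eq_mul, mul_one] at this
  exact (ZMod.natCast_eq_zero_iff_even).1 this

/-- left count in the row of a vertex -/
noncomputable def twCol {n : ℕ} (D : PV n → Prop) : PV n → ℕ
  | .inl i => (Finset.univ.filter fun j : Fin n => j < i ∧ D (.inl j)).card
  | .inr i => (Finset.univ.filter fun j : Fin n => j < i ∧ D (.inr j)).card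

theorem tw_col_ord {n : ℕ} (D : PV n → Prop) (hD : Even (Finset.univ.filter D).card)
    (u : PV n) (hu : ¬ D u) :
    (Even (twCol D u) ↔ Even (Finset.univ.filter fun v => D v ∧ ordIdx n v < ordIdx n u).card) := by
  rcases u with i | i
  · have : (Finset.univ.filter fun v => D v ∧ ordIdx n v < ordIdx n (.inl i))
        = (Finset.univ.filter fun j : Fin n => j < i ∧ D (.inl j)).map
            ⟨Sum.inl, Sum.inl_injective⟩ := by
      ext v
      rcases v with j | j
      · rw [Finset.mem_filter]; simp [ordIdx, and_comm]
      · have := i.2; have := j.2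
        rw [Finset.mem_filter]; simp [ordIdx]; intro _; omega
    rw [this, Finset.card_map]; rfl
  · have h2 : (Finset.univ.filter fun v => D v ∧ ¬ ordIdx n v < ordIdx n (.inr i))
        = (Finset.univ.filter fun j : Fin n => j < i ∧ D (.inr j)).map
            ⟨Sum.inr, Sum.inr_injective⟩ := by
      ext v
      rcases v with j | j
      · have := i.2; have := j.2
        rw [Finset.mem_filter]; simp [ordIdx]; intro _; omega
      · have hi := i.2; have hj := j.2
        rw [Finset.mem_filter]
        simp only [ordIdx, Finset.mem_filter, Finset.mem_univ, true_and, Finset.mem_map,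
          Function.Embedding.coeFn_mk, Sum.inr.injEq, exists_eq_right]
        constructor
        · rintro ⟨h1, h2⟩
          refine ⟨?_, h1⟩
          have : j ≠ i := by rintro rfl; exact hu h1
          have := Fin.val_ne_of_ne this
          rw [Fin.lt_def]; omega
        · rintro ⟨h1, h2⟩
          refine ⟨h2, ?_⟩
          rw [Fin.lt_def] at h1; omega
    have h3 := Finset.card_filter_add_card_filter_not (s := Finset.univ.filter D)
      (fun v => ordIdx n v < ordIdx n (.inr i))
    rw [Finset.filter_filter, Finset.filter_filter, h2, Finset.card_map] at h3
    rw [← h3, Nat.even_add] at hD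
    exact hD.symm

theorem tw_col_planar_aux {n : ℕ} (a : PElt n) (ha : TwU a) (hp : IsPlanar a) (D : PV n → Prop)
    (hD : ∀ v, D v → ∃ p, D p ∧ p ≠ v ∧ a.r v p) (u v : PV n) (hu : ¬ D u) (hv : ¬ D v)
    (huv : a.r u v) (hlt : ordIdx n u < ordIdx n v) : (Even (twCol D u) ↔ Even (twCol D v)) := by
  have hE := tw_even a ha D hD
  rw [tw_col_ord D hE u hu, tw_col_ord D hE v hv]
  have hne : u ≠ v := by rintro rfl; exact lt_irrefl _ hlt
  have hbet : Even (Finset.univ.filter fun d => D d ∧ ordIdx n u < ordIdx n d ∧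
      ordIdx n d < ordIdx n v).card := by
    apply tw_even a ha
    rintro d ⟨hd, h1, h2⟩
    obtain ⟨p, hDp, hpd, hdp⟩ := hD d hd
    refine ⟨p, ⟨hDp, ?_, ?_⟩, hpd, hdp⟩
    · by_contra hc
      have hpu : p ≠ u := by rintro rfl; exact hu hDp
      have : ordIdx n p ≠ ordIdx n u := fun h => hpu (tw_ord_inj h)
      refine hp ⟨p, u, d, v, by omega, h1, h2, a.symm' hdp, huv, fun hpu' => ?_⟩
      exact hpu (ha d _ _ hdp (a.trans' hdp hpu') hpd (by rintro rfl; exact hu hd))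
    · by_contra hc
      have hpv : p ≠ v := by rintro rfl; exact hv hDp
      have : ordIdx n p ≠ ordIdx n v := fun h => hpv (tw_ord_inj h)
      refine hp ⟨u, d, v, p, h1, h2, by omega, huv, hdp, fun hpu' => ?_⟩
      exact hv ((ha u d v hpu' huv (by rintro rfl; exact hu hd) hne.symm) ▸ hd)
  have h3 := Finset.card_filter_add_card_filter_not
    (s := Finset.univ.filter fun d => D d ∧ ordIdx n d < ordIdx n v)
      (fun d => ordIdx n d < ordIdx n u)
  rw [Finset.filter_filter, Finset.filter_filter] at h3
  have e1 : (Finset.univ.filter fun d => (D d ∧ ordIdx n d < ordIdx n v) ∧ ordIdx n d < ordIdx n u)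
      = Finset.univ.filter fun d => D d ∧ ordIdx n d < ordIdx n u := by
    ext d; simp only [Finset.mem_filter, Finset.mem_univ, true_and]
    constructor
    · rintro ⟨⟨h, _⟩, h'⟩; exact ⟨h, h'⟩
    · rintro ⟨h, h'⟩; exact ⟨⟨h, h'.trans hlt⟩, h'⟩
  have e2 : (Finset.univ.filter fun d => (D d ∧ ordIdx n d < ordIdx n v) ∧ ¬ ordIdx n d < ordIdx n u)
      = Finset.univ.filter fun d => D d ∧ ordIdx n u < ordIdx n d ∧
      ordIdx n d < ordIdx n v := by
    ext d; simp only [Finset.mem_filter, Finset.mem_univ, true_and]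
    constructor
    · rintro ⟨⟨h, h''⟩, h'⟩
      have : ordIdx n d ≠ ordIdx n u := fun e => hu (tw_ord_inj e ▸ h)
      exact ⟨h, by omega, h''⟩
    · rintro ⟨h, h', h''⟩; exact ⟨⟨h, h''⟩, by omega⟩
  rw [e1, e2] at h3
  rw [← h3, Nat.even_add]
  tauto

theorem tw_col_planar {n : ℕ} (a : PElt n) (ha : TwU a) (hp : IsPlanar a) (D : PV n → Prop)
    (hD : ∀ v, D v → ∃ p, D p ∧ p ≠ v ∧ a.r v p) (u v : PV n) (hu : ¬ D u) (hv : ¬ D v)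
    (huv : a.r u v) : (Even (twCol D u) ↔ Even (twCol D v)) := by
  rcases lt_trichotomy (ordIdx n u) (ordIdx n v) with h | h | h
  · exact tw_col_planar_aux a ha hp D hD u v hu hv huv h
  · rw [tw_ord_inj h]
  · exact (tw_col_planar_aux a ha hp D hD v u hv hu (a.symm' huv) h).symm

/-- left count in the row of a vertex of the stacked graph -/
noncomputable def twColT {n : ℕ} (C : TV n → Prop) : TV n → ℕ
  | .inl i => (Finset.univ.filter fun j : Fin n => j < i ∧ C (.inl j)).card
  | .inr (.inl i) => (Finset.univ.filter fun j : Fin n => j < i ∧ C (.inr (.inl j))).card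
  | .inr (.inr i) => (Finset.univ.filter fun j : Fin n => j < i ∧ C (.inr (.inr j))).card

theorem twColT_up {n : ℕ} (C : TV n → Prop) (p : PV n) :
    twColT C (upEmb p) = twCol (fun v => C (upEmb v)) p := by cases p <;> rfl
theorem twColT_down {n : ℕ} (C : TV n → Prop) (p : PV n) :
    twColT C (downEmb p) = twCol (fun v => C (downEmb v)) p := by cases p <;> rfl
theorem twColT_out {n : ℕ} (C : TV n → Prop) (p : PV n) :
    twColT C (outEmb p) = twCol (fun v => C (outEmb v)) p := by cases p <;> rfl

theorem tw_up_inj {n : ℕ} {p q : PV n} (h : upEmb p = upEmb q) : p = q := by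
  cases p <;> cases q <;> simp_all [upEmb]
theorem tw_down_inj {n : ℕ} {p q : PV n} (h : downEmb p = downEmb q) : p = q := by
  cases p <;> cases q <;> simp_all [downEmb]
theorem tw_out_inj {n : ℕ} {p q : PV n} (h : outEmb p = outEmb q) : p = q := by
  cases p <;> cases q <;> simp_all [outEmb]

/-- every vertex of C has a distinct partner in C in each layer it lives in -/
def TwGood {n : ℕ} (a b : PElt n) (C : TV n → Prop) : Prop :=
  (∀ v : PV n, C (upEmb v) → ∃ p, C (upEmb p) ∧ p ≠ v ∧ a.r v p) ∧
  (∀ v : PV n, C (downEmb v) → ∃ p, C (downEmb p) ∧ p ≠ v ∧ b.r v p)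

theorem tw_good_closed {n : ℕ} (a b : PElt n) (ha : TwU a) (hb : TwU b) (C : TV n → Prop)
    (hC : TwGood a b C) {u v : TV n} (h : EqvGen (stackRel a b) u v) : C u ↔ C v := by
  have key : ∀ u v, stackRel a b u v → C u → C v := by
    rintro u v (⟨p, q, h, rfl, rfl⟩ | ⟨p, q, h, rfl, rfl⟩) hu
    · obtain ⟨r, hr, hrp, hpr⟩ := hC.1 p hu
      by_cases hqp : q = p
      · rw [hqp]; exact hu
      · rw [ha p q r h hpr hqp hrp]; exact hr
    · obtain ⟨r, hr, hrp, hpr⟩ := hC.2 p hu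
      by_cases hqp : q = p
      · rw [hqp]; exact hu
      · rw [hb p q r h hpr hqp hrp]; exact hr
  have hs : ∀ u v, stackRel a b u v → stackRel a b v u := by
    rintro u v (⟨p, q, h, rfl, rfl⟩ | ⟨p, q, h, rfl, rfl⟩)
    · exact Or.inl ⟨q, p, a.symm' h, rfl, rfl⟩
    · exact Or.inr ⟨q, p, b.symm' h, rfl, rfl⟩
  induction h with
  | rel u v h => exact ⟨key u v h, key v u (hs u v h)⟩
  | refl => rfl
  | symm _ _ _ ih => exact ih.symm
  | trans _ _ _ _ _ ih1 ih2 => exact ih1.trans ih2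

theorem tw_good_col {n : ℕ} (a b : PElt n) (ha : TwU a) (hb : TwU b) (pa : IsPlanar a)
    (pb : IsPlanar b) (C : TV n → Prop)
    (hC : TwGood a b C) {u v : TV n} (h : EqvGen (stackRel a b) u v) (hu : ¬ C u) :
    (Even (twColT C u) ↔ Even (twColT C v)) := by
  induction h with
  | rel u v h =>
    have hv : ¬ C v := by rwa [← tw_good_closed a b ha hb C hC (EqvGen.rel _ _ h)]
    rcases h with ⟨p, q, h, rfl, rfl⟩ | ⟨p, q, h, rfl, rfl⟩
    · rw [twColT_up, twColT_up]
      exact tw_col_planar a ha pa _ hC.1 p q hu hv h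
    · rw [twColT_down, twColT_down]
      exact tw_col_planar b hb pb _ hC.2 p q hu hv h
  | refl => rfl
  | symm x y h ih =>
    exact (ih (by rwa [tw_good_closed a b ha hb C hC h])).symm
  | trans x y z h1 _ ih1 ih2 =>
    exact (ih1 hu).trans (ih2 (by rwa [← tw_good_closed a b ha hb C hC h1]))

theorem tw_good_exists {n : ℕ} (a b : PElt n) (ha : TwU a) (hb : TwU b) {x y : PV n}
    (hxy : x ≠ y) (h : EqvGen (stackRel a b) (outEmb x) (outEmb y)) :
    ∃ C : TV n → Prop, TwGood a b C ∧ ∀ z, C (outEmb z) ↔ (z = x ∨ z = y) := by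
  let G : SimpleGraph (TV n) := SimpleGraph.fromRel (stackRel a b)
  have hreach : ∀ u v, EqvGen (stackRel a b) u v → G.Reachable u v := by
    intro u v h
    induction h with
    | rel u v h =>
      by_cases e : u = v
      · rw [e]
      · exact SimpleGraph.Adj.reachable ((SimpleGraph.fromRel_adj _ _ _).2 ⟨e, Or.inl h⟩)
    | refl => exact SimpleGraph.Reachable.refl _
    | symm _ _ _ ih => exact ih.symm
    | trans _ _ _ _ _ ih1 ih2 => exact ih1.trans ih2
  obtain ⟨p, hp⟩ := (hreach _ _ h).exists_isPath
  have hlen : 0 < p.length := by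
    rcases Nat.eq_zero_or_pos p.length with h0 | h0
    · exact absurd (tw_out_inj (SimpleGraph.Walk.eq_of_length_eq_zero h0)) hxy
    · exact h0
  -- adjacency gives an upper or a lower edge
  have hadj : ∀ u v, G.Adj u v → u ≠ v ∧ ((∃ r s : PV n, a.r r s ∧ u = upEmb r ∧ v = upEmb s) ∨
      (∃ r s : PV n, b.r r s ∧ u = downEmb r ∧ v = downEmb s)) := by
    intro u v huv
    obtain ⟨hne, h | h⟩ := (SimpleGraph.fromRel_adj _ _ _).1 huv
    · exact ⟨hne, h⟩
    · refine ⟨hne, ?_⟩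
      rcases h with ⟨r, s, h, h1, h2⟩ | ⟨r, s, h, h1, h2⟩
      · exact Or.inl ⟨s, r, a.symm' h, h2, h1⟩
      · exact Or.inr ⟨s, r, b.symm' h, h2, h1⟩
  -- interior vertices have one edge of each kind
  have hint : ∀ i, 0 < i → i < p.length →
      (∃ r s : PV n, a.r r s ∧ r ≠ s ∧ p.getVert i = upEmb r ∧ upEmb s ∈ p.support) ∧
      (∃ r s : PV n, b.r r s ∧ r ≠ s ∧ p.getVert i = downEmb r ∧ downEmb s ∈ p.support) := by
    intro i hi0 hi1
    have h1 : G.Adj (p.getVert i) (p.getVert (i + 1)) := p.adj_getVert_succ hi1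
    have h2 : G.Adj (p.getVert i) (p.getVert (i - 1)) := by
      have := p.adj_getVert_succ (i := i - 1) (by omega)
      rw [Nat.sub_add_cancel hi0] at this
      exact this.symm
    have hne : p.getVert (i + 1) ≠ p.getVert (i - 1) := by
      intro e
      have := hp.getVert_injOn (by simp; omega) (by simp; omega) e
      omega
    have m1 : p.getVert (i + 1) ∈ p.support := p.getVert_mem_support _
    have m2 : p.getVert (i - 1) ∈ p.support := p.getVert_mem_support _
    obtain ⟨n1, h1⟩ := hadj _ _ h1
    obtain ⟨n2, h2⟩ := hadj _ _ h2
    rcases h1 with ⟨r, s, hrs, e1, e2⟩ | ⟨r, s, hrs, e1, e2⟩ <;>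
    rcases h2 with ⟨r', s', hrs', e1', e2'⟩ | ⟨r', s', hrs', e1', e2'⟩ <;>
    rw [e1] at n1 <;> rw [e1'] at n2 <;> rw [e2] at n1 hne m1 <;> rw [e2'] at n2 hne m2
    · have : r = r' := tw_up_inj (e1.symm.trans e1')
      subst this
      exact absurd (congrArg _ (ha r s s' hrs hrs' (fun e => n1 (e ▸ rfl)) (fun e => n2 (e ▸ rfl)))) hne
    · exact ⟨⟨r, s, hrs, fun e => n1 (e ▸ rfl), e1, m1⟩, ⟨r', s', hrs', fun e => n2 (e ▸ rfl), e1', m2⟩⟩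
    · exact ⟨⟨r', s', hrs', fun e => n2 (e ▸ rfl), e1', m2⟩, ⟨r, s, hrs, fun e => n1 (e ▸ rfl), e1, m1⟩⟩
    · have : r = r' := tw_down_inj (e1.symm.trans e1')
      subst this
      exact absurd (congrArg _ (hb r s s' hrs hrs' (fun e => n1 (e ▸ rfl)) (fun e => n2 (e ▸ rfl)))) hne
  -- end vertices
  have hend : ∀ (z : PV n) (w : TV n), G.Adj (outEmb z) w → w ∈ p.support →
      (∀ v, outEmb z = upEmb v → ∃ q, upEmb q ∈ p.support ∧ q ≠ v ∧ a.r v q) ∧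
      (∀ v, outEmb z = downEmb v → ∃ q, downEmb q ∈ p.support ∧ q ≠ v ∧ b.r v q) := by
    intro z w hzw hw
    obtain ⟨hne, h⟩ := hadj _ _ hzw
    rcases h with ⟨r, s, hrs, e1, e2⟩ | ⟨r, s, hrs, e1, e2⟩
    · constructor
      · intro v hv
        have : r = v := tw_up_inj (e1.symm.trans hv)
        subst this
        exact ⟨s, e2 ▸ hw, fun e => hne (by rw [e1, e2, e]), hrs⟩
      · intro v hv
        exfalso
        rw [hv] at e1
        cases z <;> cases v <;> cases r <;> simp [outEmb, upEmb, downEmb] at hv e1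
    · constructor
      · intro v hv
        exfalso
        rw [hv] at e1
        cases z <;> cases v <;> cases r <;> simp [outEmb, upEmb, downEmb] at hv e1
      · intro v hv
        have : r = v := tw_down_inj (e1.symm.trans hv)
        subst this
        exact ⟨s, e2 ▸ hw, fun e => hne (by rw [e1, e2, e]), hrs⟩
  have hx := hend x (p.getVert 1) (by
    have := p.adj_getVert_succ (i := 0) hlen
    simpa using this) (p.getVert_mem_support _)
  have hy := hend y (p.getVert (p.length - 1)) (by
    have := p.adj_getVert_succ (i := p.length - 1) (by omega)
    rw [Nat.sub_add_cancel hlen, p.getVert_length] at this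
    exact this.symm) (p.getVert_mem_support _)
  have hcase : ∀ u, u ∈ p.support → u = outEmb x ∨ u = outEmb y ∨
      ∃ i, 0 < i ∧ i < p.length ∧ p.getVert i = u := by
    intro u hu
    obtain ⟨i, hi, hil⟩ := SimpleGraph.Walk.mem_support_iff_exists_getVert.1 hu
    rcases Nat.eq_zero_or_pos i with h0 | h0
    · subst h0; left; rw [← hi, p.getVert_zero]
    · rcases Nat.lt_or_ge i p.length with h1 | h1
      · exact Or.inr (Or.inr ⟨i, h0, h1, hi⟩)
      · right; left; rw [← hi, show i = p.length by omega, p.getVert_length]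
  refine ⟨fun u => u ∈ p.support, ⟨?_, ?_⟩, ?_⟩
  · intro v hv
    rcases hcase _ hv with e | e | ⟨i, h0, h1, e⟩
    · exact hx.1 v e.symm
    · exact hy.1 v e.symm
    · obtain ⟨r, s, hrs, hne, e1, hs⟩ := (hint i h0 h1).1
      have : r = v := tw_up_inj (e1.symm.trans e)
      subst this
      exact ⟨s, hs, hne.symm, hrs⟩
  · intro v hv
    rcases hcase _ hv with e | e | ⟨i, h0, h1, e⟩
    · exact hx.2 v e.symm
    · exact hy.2 v e.symm
    · obtain ⟨r, s, hrs, hne, e1, hs⟩ := (hint i h0 h1).2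
      have : r = v := tw_down_inj (e1.symm.trans e)
      subst this
      exact ⟨s, hs, hne.symm, hrs⟩
  · intro z
    constructor
    · intro hz
      rcases hcase _ hz with e | e | ⟨i, h0, h1, e⟩
      · exact Or.inl (tw_out_inj e)
      · exact Or.inr (tw_out_inj e)
      · exfalso
        obtain ⟨⟨r, _, _, _, e1, _⟩, ⟨r', _, _, _, e2, _⟩⟩ := hint i h0 h1
        rw [e] at e1 e2
        cases z <;> cases r <;> cases r' <;> simp [outEmb, upEmb, downEmb] at e1 e2
    · rintro (rfl | rfl)
      · exact p.start_mem_support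
      · exact p.end_mem_support

theorem tw_mul_U {n : ℕ} (a b : PElt n) (ha : TwU a) (hb : TwU b) : TwU (pmul a b) := by
  intro x y z hy hz hyx hzx
  obtain ⟨C, hC, hout⟩ := tw_good_exists a b ha hb hyx.symm hy
  have : C (outEmb z) := (tw_good_closed a b ha hb C hC hz).1 ((hout x).2 (Or.inl rfl))
  rcases (hout z).1 this with h | h
  · exact absurd h hzx
  · exact h.symm

theorem tw_mul_planar {n : ℕ} (a b : PElt n) (ha : TwU a) (hb : TwU b) (pa : IsPlanar a)
    (pb : IsPlanar b) : IsPlanar (pmul a b) := by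
  rintro ⟨w, x, y, z, h1, h2, h3, hwy, hxz, -⟩
  have hwx : w ≠ x := by rintro rfl; omega
  have hwy' : w ≠ y := by rintro rfl; omega
  have hxy : x ≠ y := by rintro rfl; omega
  have hzw : z ≠ w := by rintro rfl; omega
  have hzy : z ≠ y := by rintro rfl; omega
  obtain ⟨C, hC, hout⟩ := tw_good_exists a b ha hb hwy' hwy
  have nx : ¬ C (outEmb x) := by rw [hout]; rintro (h | h) <;> simp_all
  have nz : ¬ C (outEmb z) := by rw [hout]; rintro (h | h) <;> simp_all
  have hcol := tw_good_col a b ha hb pa pb C hC hxz nx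
  rw [twColT_out, twColT_out] at hcol
  have e0 : (Finset.univ.filter fun v => C (outEmb v)) = {w, y} := by
    ext v; simp [hout]
  have hE : Even (Finset.univ.filter fun v => C (outEmb v)).card := by
    rw [e0, Finset.card_pair hwy']; decide
  rw [tw_col_ord _ hE x nx, tw_col_ord _ hE z nz] at hcol
  have e1 : (Finset.univ.filter fun v => C (outEmb v) ∧ ordIdx n v < ordIdx n x) = {w} := by
    ext v; simp only [hout, Finset.mem_filter, Finset.mem_univ, true_and, Finset.mem_singleton]
    constructor
    · rintro ⟨rfl | rfl, h⟩
      · rfl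
      · omega
    · rintro rfl; exact ⟨Or.inl rfl, h1⟩
  have e2 : (Finset.univ.filter fun v => C (outEmb v) ∧ ordIdx n v < ordIdx n z) = {w, y} := by
    ext v; simp only [hout, Finset.mem_filter, Finset.mem_univ, true_and, Finset.mem_singleton,
      Finset.mem_insert]
    constructor
    · rintro ⟨h, _⟩; exact h
    · rintro (rfl | rfl)
      · exact ⟨Or.inl rfl, by omega⟩
      · exact ⟨Or.inr rfl, h3⟩
  rw [e1, e2, Finset.card_pair hwy', Finset.card_singleton] at hcol
  revert hcol; decide

theorem tw_card_sum {n : ℕ} (D : PV n → Prop) : (Finset.univ.filter D).card =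
    (Finset.univ.filter fun i => D (.inl i)).card + (Finset.univ.filter fun i => D (.inr i)).card := by
  rw [Finset.card_filter, Finset.card_filter, Finset.card_filter, Fintype.sum_sum_type]

theorem tw_mul_partner {n : ℕ} (a b : PElt n) (ha : TwU a) (hb : TwU b)
    (fa : ∀ x, ∃ y, y ≠ x ∧ a.r x y) (fb : ∀ x, ∃ y, y ≠ x ∧ b.r x y) (x : PV n) :
    ∃ y, y ≠ x ∧ (pmul a b).r x y := by
  by_contra hcon
  push Not at hcon
  let C : TV n → Prop := fun v => EqvGen (stackRel a b) (outEmb x) v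
  have h1 : Even (Finset.univ.filter fun v => C (upEmb v)).card := by
    apply tw_even a ha
    intro v hv
    obtain ⟨y, hy, h⟩ := fa v
    exact ⟨y, EqvGen.trans _ _ _ hv (EqvGen.rel _ _ (Or.inl ⟨v, y, h, rfl, rfl⟩)), hy, h⟩
  have h2 : Even (Finset.univ.filter fun v => C (downEmb v)).card := by
    apply tw_even b hb
    intro v hv
    obtain ⟨y, hy, h⟩ := fb v
    exact ⟨y, EqvGen.trans _ _ _ hv (EqvGen.rel _ _ (Or.inr ⟨v, y, h, rfl, rfl⟩)), hy, h⟩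
  have h3 : (Finset.univ.filter fun v => C (outEmb v)) = {x} := by
    ext v
    simp only [Finset.mem_filter, Finset.mem_univ, true_and, Finset.mem_singleton]
    constructor
    · intro hv
      by_contra hne
      exact hcon v hne hv
    · rintro rfl
      exact EqvGen.refl _
  have h4 := congrArg Finset.card h3
  rw [tw_card_sum] at h1 h2 h4
  rw [Finset.card_singleton] at h4
  simp only [upEmb, downEmb, outEmb] at h1 h2 h4
  rw [Nat.even_add] at h1 h2
  have : Even 1 := by
    rw [← h4, Nat.even_add]
    exact h1.trans h2
  revert this; decide

theorem tw_closed {n : ℕ} (S : Set (PElt n)) (hS : S = Motzkin n ∨ S = Jones n)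
    (a b : PElt n) (ha : a ∈ S) (hb : b ∈ S) : pmul a b ∈ S := by
  rcases hS with rfl | rfl
  · have ua := (tw_block_le a).1 ha.2
    have ub := (tw_block_le b).1 hb.2
    exact ⟨tw_mul_planar a b ua ub ha.1 hb.1, (tw_block_le _).2 (tw_mul_U a b ua ub)⟩
  · have ua := (tw_block_le a).1 (fun x => (ha.2 x).le)
    have ub := (tw_block_le b).1 (fun x => (hb.2 x).le)
    refine ⟨tw_mul_planar a b ua ub ha.1 hb.1, fun x => le_antisymm
      ((tw_block_le _).2 (tw_mul_U a b ua ub) x) ((tw_block_ge _ x).2 ?_)⟩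
    exact tw_mul_partner a b ua ub (fun x => (tw_block_ge a x).1 (ha.2 x).ge)
      (fun x => (tw_block_ge b x).1 (hb.2 x).ge) x

theorem tw_mul_single {K : Type} [Field K] {n : ℕ} (ξ : K) (a b : PElt n) (c d : K) :
    twistMul ξ (Finsupp.single a c) (Finsupp.single b d) =
      Finsupp.single (pmul a b) (c * d * ξ ^ floatCount a b) := by
  unfold twistMul
  rw [Finsupp.sum_single_index, Finsupp.sum_single_index]
  · simp
  · rw [Finsupp.sum_single_index] <;> simp

theorem tw_idem_iff {K : Type} [Field K] {n : ℕ} (ξ : K) (a : PElt n) (c : K) (hc : c ≠ 0) :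
    twistMul ξ (Finsupp.single a c) (Finsupp.single a c) = Finsupp.single a c ↔
      pmul a a = a ∧ c * ξ ^ floatCount a a = 1 := by
  rw [tw_mul_single, Finsupp.single_eq_single_iff]
  have : c * c * ξ ^ floatCount a a = c ↔ c * ξ ^ floatCount a a = 1 := by
    rw [mul_assoc]
    constructor
    · intro h; exact mul_left_cancel₀ hc (by rw [h, mul_one])
    · intro h; rw [h, mul_one]
  rw [this]
  constructor
  · rintro (h | h)
    · exact h
    · exact absurd h.2 hc
  · exact Or.inl

theorem tw_variant_sub {K : Type} [Field K] {n : ℕ} (ξ : K) (S : Set (PElt n))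
    (hS : S = Motzkin n ∨ S = Jones n) : TwistedVariant ξ S ⊆ TwistNat ξ S := by
  intro f hf
  refine hf (TwistNat ξ S) ⟨fun a ha => ⟨0, a, ha, by rw [pow_zero]⟩, ?_⟩
  rintro _ ⟨i, a, ha, rfl⟩ _ ⟨j, b, hb, rfl⟩
  refine ⟨i + j + floatCount a b, pmul a b, tw_closed S hS a b ha hb, ?_⟩
  rw [tw_mul_single, pow_add, pow_add]

end TwistedHelpers

/-- Proposition 4.4. Let `S` be `M_n` or `J_n`, `k` a field and
`ξ ∈ k∖{0}`. Then (i) `α ↦ ξ^{−m(α,α)}·α` is a bijection from `E(S)` onto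
`E(⟨S^ξ, ξ·1, ξ⁻¹·1⟩)`, with `α ∈ E(S)` iff `ξ^{−m(α,α)}·α ∈ E(⟨S^ξ, ξ·1, ξ⁻¹·1⟩)`;
(ii) if `ξ` is a root of unity then `|E(⟨S^ξ, ξ·1⟩)| = |E(S)|`; and (iii) if `ξ` is not
a root of unity then `E(⟨S^ξ, ξ·1⟩) = E(S^ξ) = {α ∈ E(S) : m(α,α) = 0}`. -/
theorem twisted_idempotents {K : Type} [Field K] (n : ℕ) (S : Set (PElt n))
    (hS : S = Motzkin n ∨ S = Jones n) (ξ : K) (hξ : ξ ≠ 0) :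
    (Set.BijOn (fun a : PElt n => Finsupp.single a (ξ ^ (-(floatCount a a : ℤ))))
        (Eset S) (EsetTwist ξ (TwistInt ξ S)) ∧
      ∀ a ∈ S, (a ∈ Eset S ↔
        Finsupp.single a (ξ ^ (-(floatCount a a : ℤ))) ∈ EsetTwist ξ (TwistInt ξ S))) ∧
    ((∃ m : ℕ, 0 < m ∧ ξ ^ m = 1) →
      Nat.card ↥(EsetTwist ξ (TwistNat ξ S)) = Nat.card ↥(Eset S)) ∧
    ((¬ ∃ m : ℕ, 0 < m ∧ ξ ^ m = 1) →
      EsetTwist ξ (TwistNat ξ S) = EsetTwist ξ (TwistedVariant ξ S) ∧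
      EsetTwist ξ (TwistedVariant ξ S) =
        {f | ∃ a ∈ Eset S, floatCount a a = 0 ∧ f = Finsupp.single a (1 : K)}) := by
  have hz : ∀ i : ℤ, ξ ^ i ≠ 0 := fun i => zpow_ne_zero i hξ
  have hinv : ∀ a : PElt n, ξ ^ (-(floatCount a a : ℤ)) * ξ ^ floatCount a a = 1 := by
    intro a
    rw [← zpow_natCast, ← zpow_add₀ hξ]; simp
  have hbij : Set.BijOn (fun a : PElt n => Finsupp.single a (ξ ^ (-(floatCount a a : ℤ))))
        (Eset S) (EsetTwist ξ (TwistInt ξ S)) := by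
    refine ⟨?_, ?_, ?_⟩
    · intro a ha
      exact ⟨⟨_, a, ha.1, rfl⟩, (tw_idem_iff ξ a _ (hz _)).2 ⟨ha.2, hinv a⟩⟩
    · intro a _ b _ h
      exact ((Finsupp.single_eq_single_iff _ _ _ _).1 h).elim (fun h => h.1)
        (fun h => absurd h.1 (hz _))
    · rintro _ ⟨⟨i, a, ha, rfl⟩, h⟩
      have h := (tw_idem_iff ξ a _ (hz _)).1 h
      refine ⟨a, ⟨ha, h.1⟩, ?_⟩
      have : ξ ^ (-(floatCount a a : ℤ)) = ξ ^ i :=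
        mul_right_cancel₀ (pow_ne_zero (floatCount a a) hξ) ((hinv a).trans h.2.symm)
      simp only [this]
  refine ⟨⟨hbij, ?_⟩, ?_, ?_⟩
  · intro a ha
    refine ⟨fun h => hbij.mapsTo h, fun h => ⟨ha, ((tw_idem_iff ξ a _ (hz _)).1 h.2).1⟩⟩
  · rintro ⟨m, hm, h1⟩
    have : TwistNat ξ S = TwistInt ξ S := by
      ext f
      constructor
      · rintro ⟨i, a, ha, rfl⟩
        exact ⟨i, a, ha, by rw [zpow_natCast]⟩
      · rintro ⟨i, a, ha, rfl⟩
        refine ⟨(i % (m : ℤ)).toNat, a, ha, ?_⟩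
        rw [← zpow_natCast, Int.toNat_of_nonneg (Int.emod_nonneg _ (by omega))]
        conv_lhs => rw [← Int.emod_add_mul_ediv i m]
        rw [zpow_add₀ hξ, zpow_mul, zpow_natCast, h1, one_zpow, mul_one]
    rw [this]
    exact (Nat.card_congr (hbij.equiv _)).symm
  · intro hroot
    have hsub : EsetTwist ξ (TwistNat ξ S) ⊆
        {f | ∃ a ∈ Eset S, floatCount a a = 0 ∧ f = Finsupp.single a (1 : K)} := by
      rintro _ ⟨⟨i, a, ha, rfl⟩, h⟩
      have h := (tw_idem_iff ξ a _ (pow_ne_zero _ hξ)).1 h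
      rw [← pow_add] at h
      have h0 : i + floatCount a a = 0 := by
        by_contra hne
        exact hroot ⟨_, Nat.pos_of_ne_zero hne, h.2⟩
      refine ⟨a, ⟨ha, h.1⟩, by omega, ?_⟩
      rw [show i = 0 by omega, pow_zero]
    have hsup : {f | ∃ a ∈ Eset S, floatCount a a = 0 ∧ f = Finsupp.single a (1 : K)} ⊆
        EsetTwist ξ (TwistedVariant ξ S) := by
      rintro _ ⟨a, ha, h0, rfl⟩
      refine ⟨fun T hT => hT.1 a ha.1, (tw_idem_iff ξ a _ one_ne_zero).2 ⟨ha.2, ?_⟩⟩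
      rw [h0, pow_zero, mul_one]
    have hmid : EsetTwist ξ (TwistedVariant ξ S) ⊆ EsetTwist ξ (TwistNat ξ S) :=
      fun f hf => ⟨tw_variant_sub ξ S hS hf.1, hf.2⟩
    exact ⟨Set.Subset.antisymm (hsub.trans hsup) hmid,
      Set.Subset.antisymm (hmid.trans hsub) hsup⟩
end
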